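/- arXiv:2006.15287 — 5 statements merged into one kernel-verified Lean document; each statement's English description precedes it below -/
import Mathlib

section
/- Let L ≥ 3 and s be positive integers with L ≥ s+1. Then for every integer N ≥ Γ(s), the number of partitions of N lying in C*_{L,s} is at least the number of partitions of N lying in D_{L,s}. -/
/-- `D_{L,s}`: nonempty partitions with all parts in `{s+1, ..., L+s}`. -/
def InD (L s : ℕ) {N : ℕ} (p : N.Partition) : Prop :=
  p.parts ≠ 0 ∧ ∀ x ∈ p.parts, s + 1 ≤ x ∧ x ≤ L + s

/-- `I_{L,s,k}`: partitions with smallest part `s`, all parts `≤ L+s`, and no part equal to `k`. -/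
def InI (L s k : ℕ) {N : ℕ} (p : N.Partition) : Prop :=
  s ∈ p.parts ∧ (∀ x ∈ p.parts, s ≤ x ∧ x ≤ L + s) ∧ k ∉ p.parts

/-- `C*_{L,s}`: partitions with smallest part `s`, all parts `≤ L+s`, and no part equal to `L`. -/
def InCStar (L s : ℕ) {N : ℕ} (p : N.Partition) : Prop :=
  s ∈ p.parts ∧ (∀ x ∈ p.parts, s ≤ x ∧ x ≤ L + s) ∧ L ∉ p.parts

/-- `P_{L,s} = (s+1)(s+2)⋯(s+L)`. -/
def prodP (L s : ℕ) : ℕ := ∏ i ∈ Finset.range L, (s + 1 + i)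

/-- `γ(L,s)`. -/
def gammaLS (L s : ℕ) : ℕ :=
  (∑ i ∈ Finset.range L, (s + 1 + i)) *
    (prodP L s ^ ((prodP L s ^ 2 - 1) * L + 2) + ((prodP L s ^ 2 - 1) * L - 2) * prodP L s)

/-- `Γ(s) = γ(3s+2, s)`. -/
def GammaS (s : ℕ) : ℕ := gammaLS (3 * s + 2) s

/-- multisets of positive elements of `T` with sum `n`. -/
def MM (T : Finset ℕ) (n : ℕ) : Finset (Multiset ℕ) :=
  ((Finset.univ : Finset n.Partition).image (fun p => p.parts)).filter (fun m => ∀ x ∈ m, x ∈ T)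

lemma mem_MM {T : Finset ℕ} {n : ℕ} {m : Multiset ℕ} :
    m ∈ MM T n ↔ (∀ x ∈ m, 0 < x ∧ x ∈ T) ∧ m.sum = n := by
  unfold MM
  simp only [Finset.mem_filter, Finset.mem_image, Finset.mem_univ, true_and]
  constructor
  · rintro ⟨⟨p, rfl⟩, h⟩
    exact ⟨fun x hx => ⟨p.parts_pos hx, h x hx⟩, p.parts_sum⟩
  · rintro ⟨h, hs⟩
    exact ⟨⟨⟨m, fun {i} hi => (h i hi).1, hs⟩, rfl⟩, fun x hx => (h x hx).2⟩

lemma card_part_eq (T : Finset ℕ) (N : ℕ) (P : N.Partition → Prop)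
    (Q : Multiset ℕ → Prop) [DecidablePred Q] (h : ∀ p, P p ↔ ((∀ x ∈ p.parts, x ∈ T) ∧ Q p.parts)) :
    Nat.card {p : N.Partition // P p} = ((MM T N).filter Q).card := by
  classical
  rw [Nat.card_eq_fintype_card, Fintype.card_subtype]
  apply Finset.card_nbij (fun p => p.parts)
  · intro p hp
    simp only [Finset.coe_filter, Finset.mem_univ, true_and, Set.mem_ofPred_eq, mem_MM] at hp ⊢
    rw [h] at hp
    exact ⟨⟨fun x hx => ⟨p.parts_pos hx, hp.1 x hx⟩, p.parts_sum⟩, hp.2⟩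
  · intro p _ q _ hpq
    exact Nat.Partition.ext hpq
  · intro m hm
    simp only [Finset.coe_filter, Set.mem_ofPred_eq, mem_MM] at hm
    obtain ⟨⟨h1, h2⟩, h3⟩ := hm
    refine ⟨⟨m, fun {i} hi => (h1 i hi).1, h2⟩, ?_, rfl⟩
    simp only [Finset.coe_filter, Finset.mem_univ, true_and, Set.mem_ofPred_eq]
    rw [h]
    exact ⟨fun x hx => (h1 x hx).2, h3⟩

lemma card_conv (T T' : Finset ℕ) (hd : Disjoint T T') (n : ℕ) :
    (MM (T ∪ T') n).card
      = ∑ p ∈ Finset.HasAntidiagonal.antidiagonal n, (MM T p.1).card * (MM T' p.2).card := by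
  classical
  have : ∑ p ∈ Finset.HasAntidiagonal.antidiagonal n, (MM T p.1).card * (MM T' p.2).card
      = ((Finset.HasAntidiagonal.antidiagonal n).sigma (fun p => MM T p.1 ×ˢ MM T' p.2)).card := by
    rw [Finset.card_sigma]
    exact Finset.sum_congr rfl fun p _ => (Finset.card_product _ _).symm
  rw [this]
  symm
  apply Finset.card_nbij (fun x => x.2.1 + x.2.2)
  · rintro ⟨⟨i, j⟩, m, m'⟩ hx
    simp only [Finset.coe_sigma, Set.mem_sigma_iff, Finset.mem_coe, Finset.HasAntidiagonal.mem_antidiagonal,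
      Finset.mem_product, mem_MM] at hx ⊢
    obtain ⟨hij, ⟨h1, h2⟩, h3, h4⟩ := hx
    refine ⟨fun x hx => ?_, by simp [h2, h4, hij]⟩
    rcases Multiset.mem_add.1 hx with h | h
    · exact ⟨(h1 x h).1, Finset.mem_union_left _ (h1 x h).2⟩
    · exact ⟨(h3 x h).1, Finset.mem_union_right _ (h3 x h).2⟩
  · have key : ∀ m m' : Multiset ℕ, (∀ x ∈ m, 0 < x ∧ x ∈ T) → (∀ x ∈ m', 0 < x ∧ x ∈ T') →
        (m + m').filter (· ∈ T) = m ∧ (m + m').filter (· ∉ T) = m' := by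
      intro m m' h h'
      have hn : ∀ x ∈ m', x ∉ T := fun x hx hxT =>
        (Finset.disjoint_left.1 hd hxT) (h' x hx).2
      rw [Multiset.filter_add, Multiset.filter_add]
      rw [Multiset.filter_eq_self.2 (fun x hx => (h x hx).2), Multiset.filter_eq_nil.2 hn,
        Multiset.filter_eq_self.2 hn, Multiset.filter_eq_nil.2 (fun x hx => not_not.2 (h x hx).2)]
      simp
    rintro ⟨⟨i, j⟩, m, m'⟩ hx ⟨⟨i2, j2⟩, m2, m2'⟩ hx2 he
    simp only [Finset.coe_sigma, Set.mem_sigma_iff, Finset.mem_coe, Finset.HasAntidiagonal.mem_antidiagonal,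
      Finset.mem_product, mem_MM] at hx hx2 he
    obtain ⟨hij, ⟨h1, h2⟩, h3, h4⟩ := hx
    obtain ⟨hij', ⟨h1', h2'⟩, h3', h4'⟩ := hx2
    obtain ⟨e1, e2⟩ := key m m' h1 h3
    obtain ⟨e1', e2'⟩ := key m2 m2' h1' h3'
    rw [he] at e1 e2
    have a1 : m = m2 := e1.symm.trans e1'
    have a2 : m' = m2' := e2.symm.trans e2'
    subst a1 a2 h2 h4 h2' h4'
    rfl
  · intro m hm
    simp only [Finset.mem_coe, mem_MM] at hm
    obtain ⟨h1, h2⟩ := hm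
    have hadd := Multiset.filter_add_not (· ∈ T) m
    refine ⟨⟨((m.filter (· ∈ T)).sum, (m.filter (· ∉ T)).sum), m.filter (· ∈ T),
      m.filter (· ∉ T)⟩, ?_, hadd⟩
    simp only [Finset.coe_sigma, Set.mem_sigma_iff, Finset.mem_coe, Finset.HasAntidiagonal.mem_antidiagonal,
      Finset.mem_product, mem_MM]
    refine ⟨?_, ⟨fun x hx => ?_, trivial⟩, fun x hx => ?_, trivial⟩
    · rw [← Multiset.sum_add, hadd, h2]
    · rw [Multiset.mem_filter] at hx
      exact ⟨(h1 x hx.1).1, hx.2⟩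
    · rw [Multiset.mem_filter] at hx
      exact ⟨(h1 x hx.1).1, (Finset.mem_union.1 (h1 x hx.1).2).resolve_left hx.2⟩

lemma card_single (t n : ℕ) (ht : 0 < t) : (MM {t} n).card = if t ∣ n then 1 else 0 := by
  have hrep : ∀ m ∈ MM {t} n, m = Multiset.replicate (n / t) t ∧ t ∣ n := by
    intro m hm
    rw [mem_MM] at hm
    have := Multiset.eq_replicate_card.2 (fun x hx => by simpa using (hm.1 x hx).2)
    have hs := hm.2
    rw [this] at hs
    simp only [Multiset.sum_replicate, smul_eq_mul] at hs
    rw [← hs, Nat.mul_div_cancel _ ht]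
    exact ⟨this, Dvd.intro_left _ rfl⟩
  split_ifs with h
  · rw [Finset.card_eq_one]
    refine ⟨Multiset.replicate (n / t) t, ?_⟩
    ext m
    rw [Finset.mem_singleton]
    refine ⟨fun hm => (hrep m hm).1, ?_⟩
    rintro rfl
    rw [mem_MM]
    refine ⟨fun x hx => ?_, ?_⟩
    · rw [Multiset.eq_of_mem_replicate hx]; simp [ht]
    · simp [Nat.div_mul_cancel h]
  · rw [Finset.card_eq_zero, Finset.eq_empty_iff_forall_notMem]
    exact fun m hm => h (hrep m hm).2

lemma card_insert_part (t : ℕ) (ht : 0 < t) (T : Finset ℕ) (hT : t ∉ T) (n : ℕ) :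
    (MM ({t} ∪ T) n).card = ∑ k ∈ Finset.range (n / t + 1), (MM T (n - k * t)).card := by
  rw [card_conv _ _ (by simpa using hT),
    Finset.Nat.sum_antidiagonal_eq_sum_range_succ (fun i j => (MM {t} i).card * (MM T j).card)]
  simp only [card_single _ _ ht, ite_mul, one_mul, zero_mul]
  rw [← Finset.sum_filter]
  symm
  apply Finset.sum_nbij (fun k => k * t)
  · intro k hk
    simp only [Finset.mem_range, Finset.mem_filter] at hk ⊢
    have : k * t ≤ n := (Nat.le_div_iff_mul_le ht).1 (by omega)
    exact ⟨by omega, Dvd.intro_left _ rfl⟩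
  · intro k _ k' _ h
    exact Nat.eq_of_mul_eq_mul_right ht h
  · intro i hi
    simp only [Finset.coe_filter, Finset.mem_range, Set.mem_ofPred_eq] at hi
    obtain ⟨h1, c, rfl⟩ := hi
    refine ⟨c, ?_, by simp [mul_comm]⟩
    simp only [Finset.coe_range, Set.mem_Iio]
    have : c ≤ n / t := (Nat.le_div_iff_mul_le ht).2 (by rw [mul_comm]; omega)
    omega
  · intros; rfl

/-- two consecutive parts -/
lemma card_two (a n : ℕ) (ha : 0 < a) :
    (MM {a, a + 1} n).card = ((Finset.range (n + 1)).filter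
      (fun z => a * z ≤ n ∧ n ≤ (a + 1) * z)).card := by
  symm
  apply Finset.card_nbij
    (fun z => Multiset.replicate ((a + 1) * z - n) a + Multiset.replicate (n - a * z) (a + 1))
  · intro z hz
    simp only [Finset.coe_filter, Set.mem_ofPred_eq, Finset.mem_coe, mem_MM] at hz ⊢
    obtain ⟨-, h1, h2⟩ := hz
    refine ⟨fun x hx => ?_, ?_⟩
    · rcases Multiset.mem_add.1 hx with h | h <;> rw [Multiset.eq_of_mem_replicate h] <;> simp [ha]
    · simp only [Multiset.sum_add, Multiset.sum_replicate, smul_eq_mul]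
      zify [h1, h2]; ring
  · intro z hz z' hz' h
    simp only [Finset.coe_filter, Set.mem_ofPred_eq] at hz hz'
    have := congrArg Multiset.card h
    simp only [Multiset.card_add, Multiset.card_replicate] at this
    obtain ⟨-, h1, h2⟩ := hz
    obtain ⟨-, h1', h2'⟩ := hz'
    zify [h1, h2, h1', h2'] at this
    zify; linarith
  · intro m hm
    simp only [Finset.mem_coe, mem_MM] at hm
    obtain ⟨h1, h2⟩ := hm
    have hm : m = Multiset.replicate (m.count a) a + Multiset.replicate (m.count (a + 1)) (a + 1) := by
      ext x
      rw [Multiset.count_add, Multiset.count_replicate, Multiset.count_replicate]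
      by_cases hx : x ∈ m
      · have := (h1 x hx).2
        simp only [Finset.mem_insert, Finset.mem_singleton] at this
        rcases this with rfl | rfl <;> simp
      · have h0 := Multiset.count_eq_zero.2 hx
        rw [h0]
        by_cases e1 : a = x
        · subst e1; simp [h0]
        · by_cases e2 : a + 1 = x
          · subst e2; simp [h0]
          · simp [e1, e2]
    have hs : m.count a * a + m.count (a + 1) * (a + 1) = n := by
      rw [← h2]; conv_rhs => rw [hm]
      simp
    generalize m.count a = u at *
    generalize m.count (a + 1) = v at *
    have e1 : (a + 1) * (u + v) - n = u := by
      rw [← hs]; zify [show u * a + v * (a+1) ≤ (a + 1) * (u + v) by nlinarith]; ring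
    have e2 : n - a * (u + v) = v := by
      rw [← hs]; zify [show a * (u + v) ≤ u * a + v * (a+1)  by nlinarith]; ring
    refine ⟨u + v, ?_, ?_⟩
    · simp only [Finset.coe_filter, Set.mem_ofPred_eq, Finset.mem_range]
      refine ⟨?_, ?_, ?_⟩ <;> nlinarith
    · simp only [e1, e2]
      exact hm.symm

lemma card_two_bounds (a n : ℕ) (ha : 0 < a) :
    a * (a + 1) * (MM {a, a + 1} n).card ≤ n + a * (a + 1) ∧
    n ≤ a * (a + 1) * (MM {a, a + 1} n).card + a * (a + 1) := by
  have hf : (Finset.range (n + 1)).filter (fun z => a * z ≤ n ∧ n ≤ (a + 1) * z)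
      = Finset.Icc ((n + a) / (a + 1)) (n / a) := by
    ext z
    simp only [Finset.mem_filter, Finset.mem_range, Finset.mem_Icc]
    rw [Nat.le_div_iff_mul_le ha]
    have : (n + a) / (a + 1) ≤ z ↔ n ≤ (a + 1) * z := by
      rw [← Nat.lt_succ_iff, Nat.div_lt_iff_lt_mul (by omega)]
      constructor <;> intro h <;> nlinarith
    rw [this]
    constructor
    · rintro ⟨_, h1, h2⟩; exact ⟨h2, by linarith⟩
    · rintro ⟨h1, h2⟩; exact ⟨by nlinarith, by linarith, h1⟩
  rw [card_two a n ha, hf, Nat.card_Icc]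
  set x := (n + a) / (a + 1) with hx
  set y := n / a with hy
  have x1 : (a + 1) * x ≤ n + a := Nat.mul_div_le _ _
  have x2 : n + a < (a + 1) * (x + 1) := by
    have := Nat.lt_mul_div_succ (n + a) (show 0 < a + 1 by omega); exact this
  have y1 : a * y ≤ n := Nat.mul_div_le _ _
  have y2 : n < a * (y + 1) := Nat.lt_mul_div_succ n ha
  have hxy : x ≤ y + 1 := by
    by_contra hc
    push Not at hc
    nlinarith
  zify [hxy] at *
  constructor <;> nlinarith

lemma sum_arith (x h : ℤ) (q : ℕ) :
    2 * ∑ k ∈ Finset.range (q + 1), (x - k * h) = (q + 1) * (2 * x - h * q) := by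
  induction q with
  | zero => simp
  | succ q ih =>
    rw [Finset.sum_range_succ, mul_add, ih]; push_cast; ring

lemma U_bound (a L h n : ℕ) (ha : 0 < a) (hh : 0 < h) (hL : h ≤ L) (hLa : L ∉ ({a, a + 1} : Finset ℕ)) :
    (2 * h * (a * (a + 1)) * (MM ({L} ∪ {a, a + 1}) n).card : ℤ)
      ≤ (n + h) * (n + h + 2 * (a * (a + 1))) := by
  rw [card_insert_part L (by omega) _ hLa]
  set Q : ℕ := a * (a + 1) with hQ
  have h1 : Q * ∑ k ∈ Finset.range (n / L + 1), (MM {a, a + 1} (n - k * L)).card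
      ≤ ∑ k ∈ Finset.range (n / h + 1), (n + Q - k * h) := by
    rw [Finset.mul_sum]
    refine le_trans (Finset.sum_le_sum (g := fun k => n + Q - k * h) ?_)
      (Finset.sum_le_sum_of_subset ?_)
    · intro k hk
      rw [Finset.mem_range] at hk
      have hkL : k * L ≤ n := (Nat.le_div_iff_mul_le (by omega)).1 (by omega)
      have := (card_two_bounds a (n - k * L) ha).1
      rw [← hQ] at this
      have h2 : k * h ≤ k * L := Nat.mul_le_mul_left _ hL
      omega
    · apply Finset.range_subset_range.2
      have := Nat.div_le_div_left (a := n) hL hh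
      omega
  have h2 : ((∑ k ∈ Finset.range (n / h + 1), (n + Q - k * h) : ℕ) : ℤ)
      = ∑ k ∈ Finset.range (n / h + 1), (((n : ℤ) + Q) - k * h) := by
    rw [Nat.cast_sum]
    apply Finset.sum_congr rfl
    intro k hk
    rw [Finset.mem_range] at hk
    have hkL : k * h ≤ n := (Nat.le_div_iff_mul_le (by omega)).1 (by omega)
    rw [Nat.cast_sub (by omega)]; push_cast; ring
  have h3 := sum_arith ((n : ℤ) + Q) h (n / h)
  rw [← h2] at h3
  set q := n / h
  have q1 : h * q ≤ n := Nat.mul_div_le _ _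
  have q2 : n < h * (q + 1) := Nat.lt_mul_div_succ n hh
  generalize (∑ k ∈ Finset.range (n / L + 1), (MM {a, a + 1} (n - k * L)).card) = S at *
  generalize (∑ k ∈ Finset.range (q + 1), (n + Q - k * h)) = S' at *
  zify at h1 q1 q2 hh
  have h4 : (2 * h * (a * (a + 1)) * S : ℤ) = h * (2 * (Q * S)) := by rw [hQ]; push_cast; ring
  have h5 : ((a : ℤ) * (a + 1)) = Q := by rw [hQ]; push_cast; ring
  rw [h4, h5]
  have h6 : (h : ℤ) * (2 * (Q * S)) ≤ h * (2 * S') := by gcongr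
  rw [h3] at h6
  refine h6.trans ?_
  rw [← mul_assoc]
  have hQ0 : (0 : ℤ) ≤ Q := by positivity
  apply mul_le_mul <;> nlinarith

lemma V_bound (a s x : ℕ) (ha : 0 < a) (hs : 0 < s) (hsa : s ∉ ({a, a + 1} : Finset ℕ))
    (hx : 2 * (a * (a + 1)) ≤ x) :
    ((x : ℤ) * (x - 2 * (a * (a + 1)))) ≤
    (2 * s * (a * (a + 1)) * (MM ({s} ∪ {a, a + 1}) x).card : ℤ) := by
  rw [card_insert_part s (by omega) _ hsa]
  set Q : ℕ := a * (a + 1) with hQ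
  have h1 : ∑ k ∈ Finset.range (x / s + 1), (((x : ℤ) - Q) - k * s) ≤
      (Q * ∑ k ∈ Finset.range (x / s + 1), (MM {a, a + 1} (x - k * s)).card : ℕ) := by
    rw [Finset.mul_sum, Nat.cast_sum]
    apply Finset.sum_le_sum
    intro k hk
    rw [Finset.mem_range] at hk
    have hkL : k * s ≤ x := (Nat.le_div_iff_mul_le (by omega)).1 (by omega)
    have := (card_two_bounds a (x - k * s) ha).2
    rw [← hQ] at this
    zify [hkL] at this
    push_cast
    linarith
  have h3 := sum_arith ((x : ℤ) - Q) s (x / s)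
  set q := x / s
  have q1 : s * q ≤ x := Nat.mul_div_le _ _
  have q2 : x < s * (q + 1) := Nat.lt_mul_div_succ x hs
  generalize (∑ k ∈ Finset.range (q + 1), (MM {a, a + 1} (x - k * s)).card) = S at *
  generalize (∑ k ∈ Finset.range (q + 1), (((x : ℤ) - Q) - k * s)) = S' at *
  zify at q1 q2 hs hx
  have h4 : (2 * s * (a * (a + 1)) * S : ℤ) = s * (2 * (Q * S)) := by rw [hQ]; push_cast; ring
  have h5 : ((a : ℤ) * (a + 1)) = Q := by rw [hQ]; push_cast; ring
  rw [h4, h5]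
  push_cast at h1
  have h6 : (s : ℤ) * (2 * S') ≤ s * (2 * (Q * S)) := by gcongr
  rw [h3] at h6
  refine le_trans ?_ h6
  rw [← mul_assoc]
  apply mul_le_mul <;> nlinarith

lemma card_filter_mem (T : Finset ℕ) (s N : ℕ) (hs : 0 < s) (hsT : s ∈ T) :
    ((MM T N).filter (fun m => s ∈ m)).card = if s ≤ N then (MM T (N - s)).card else 0 := by
  split_ifs with h
  · symm
    apply Finset.card_nbij (fun m => s ::ₘ m)
    · intro m hm
      simp only [Finset.coe_filter, Set.mem_ofPred_eq, Finset.mem_coe, mem_MM] at hm ⊢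
      refine ⟨⟨fun x hx => ?_, ?_⟩, by simp⟩
      · rcases Multiset.mem_cons.1 hx with rfl | h
        · exact ⟨hs, hsT⟩
        · exact hm.1 x h
      · rw [Multiset.sum_cons, hm.2]; omega
    · intro m _ m' _ h
      exact (Multiset.cons_inj_right s).1 h
    · intro m hm
      simp only [Finset.coe_filter, Set.mem_ofPred_eq, mem_MM] at hm
      refine ⟨m.erase s, ?_, Multiset.cons_erase hm.2⟩
      simp only [Finset.mem_coe, mem_MM]
      refine ⟨fun x hx => hm.1.1 x (Multiset.mem_of_mem_erase hx), ?_⟩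
      have := Multiset.sum_erase hm.2
      omega
  · rw [Finset.card_eq_zero, Finset.eq_empty_iff_forall_notMem]
    intro m hm
    simp only [Finset.mem_filter, mem_MM] at hm
    have := Multiset.single_le_sum (fun _ _ => Nat.zero_le _) s hm.2
    omega

lemma combine (U V l : ℕ → ℕ) (n0 n1 B N : ℕ)
    (h1 : ∀ n < n0, U n ≤ B) (h2 : ∀ n, n0 ≤ n → U n ≤ V n)
    (h3 : ∀ n, n1 ≤ n → U n + 2 * n0 * B ≤ V n) (h01 : n0 ≤ n1) (hN : n0 ≤ N + 1)
    (h4 : ∀ n < n0, l (N - n) ≤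
      2 * ∑ k ∈ (Finset.range (N + 1)).filter (fun k => n1 ≤ k), l (N - k)) :
    ∑ n ∈ Finset.range (N + 1), U n * l (N - n) ≤ ∑ n ∈ Finset.range (N + 1), V n * l (N - n) := by
  set S := ∑ k ∈ (Finset.range (N + 1)).filter (fun k => n1 ≤ k), l (N - k) with hS
  have p : ∑ n ∈ Finset.range (N + 1), (U n * l (N - n)
        + (if n1 ≤ n then 2 * n0 * B * l (N - n) else 0))
      ≤ ∑ n ∈ Finset.range (N + 1), (V n * l (N - n) + (if n < n0 then B * l (N - n) else 0)) := by
    apply Finset.sum_le_sum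
    intro n _
    by_cases c1 : n1 ≤ n
    · rw [if_pos c1, if_neg (by omega), ← add_mul]
      simpa using Nat.mul_le_mul_right _ (h3 n c1)
    · rw [if_neg c1]
      by_cases c0 : n < n0
      · rw [if_pos c0]
        have := Nat.mul_le_mul_right (l (N - n)) (h1 n c0)
        omega
      · rw [if_neg c0]
        simpa using Nat.mul_le_mul_right _ (h2 n (by omega))
  rw [Finset.sum_add_distrib, Finset.sum_add_distrib, ← Finset.sum_filter, ← Finset.mul_sum,
    ← hS, ← Finset.sum_filter] at p
  have q : ∑ n ∈ (Finset.range (N + 1)).filter (fun n => n < n0), B * l (N - n) ≤ 2 * n0 * B * S := by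
    have : (Finset.range (N + 1)).filter (fun n => n < n0) = Finset.range n0 := by
      ext n; simp only [Finset.mem_filter, Finset.mem_range]; omega
    rw [this]
    refine (Finset.sum_le_card_nsmul _ _ (B * (2 * S)) ?_).trans ?_
    · intro n hn
      exact Nat.mul_le_mul_left _ (h4 n (Finset.mem_range.1 hn))
    · rw [Finset.card_range, smul_eq_mul]; apply le_of_eq; ring
  omega

lemma large_bound (F : Finset ℕ) (n1 N n : ℕ) (h1 : 0 < n1) (hn : n ≤ N) (hm : n1 ^ 3 < N - n) :
    (MM F (N - n)).card ≤
      2 * ∑ k ∈ (Finset.range (N + 1)).filter (fun k => n1 ≤ k), (MM F (N - k)).card := by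
  classical
  set m := N - n with hmdef
  let I := F.filter (fun y => n1 ≤ y ∧ y ≤ m)
  let J := F.filter (fun y => 0 < y ∧ n1 * y ≤ m)
  have hsub : MM F m ⊆ (I.biUnion fun y => (MM F (m - y)).image (fun t => y ::ₘ t)) ∪
      (J.biUnion fun y => (MM F (m - n1 * y)).image (fun t => Multiset.replicate n1 y + t)) := by
    intro t ht
    rw [mem_MM] at ht
    rw [Finset.mem_union, Finset.mem_biUnion, Finset.mem_biUnion]
    by_cases c : ∃ y ∈ t, n1 ≤ y
    · left
      obtain ⟨y, hy, hy1⟩ := c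
      have hsum := Multiset.sum_erase hy
      refine ⟨y, Finset.mem_filter.2 ⟨(ht.1 y hy).2, hy1, by omega⟩, Finset.mem_image.2
        ⟨t.erase y, ?_, Multiset.cons_erase hy⟩⟩
      rw [mem_MM]
      exact ⟨fun x hx => ht.1 x (Multiset.mem_of_mem_erase hx), by omega⟩
    · right
      push Not at c
      have : ∃ y ∈ t, n1 ≤ t.count y := by
        by_contra hc
        push Not at hc
        have hs : t.sum ≤ n1 ^ 3 := by
          rw [Finset.sum_multiset_count]
          have hss : t.toFinset ⊆ Finset.range n1 := fun x hx =>
            Finset.mem_range.2 (c x (Multiset.mem_toFinset.1 hx))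
          calc ∑ x ∈ t.toFinset, t.count x • x ≤ ∑ x ∈ t.toFinset, n1 * n1 := by
                apply Finset.sum_le_sum
                intro x hx
                rw [Multiset.mem_toFinset] at hx
                exact Nat.mul_le_mul (hc x hx).le (c x hx).le
            _ ≤ ∑ x ∈ Finset.range n1, n1 * n1 := Finset.sum_le_sum_of_subset hss
            _ = n1 ^ 3 := by simp; ring
        omega
      obtain ⟨y, hy, hy1⟩ := this
      have hle : Multiset.replicate n1 y ≤ t := Multiset.le_count_iff_replicate_le.1 hy1
      obtain ⟨u, rfl⟩ := Multiset.le_iff_exists_add.1 hle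
      have hsum := ht.2
      rw [Multiset.sum_add, Multiset.sum_replicate, smul_eq_mul] at hsum
      refine ⟨y, Finset.mem_filter.2 ⟨(ht.1 y hy).2, (ht.1 y hy).1, by omega⟩, Finset.mem_image.2
        ⟨u, ?_, rfl⟩⟩
      rw [mem_MM]
      exact ⟨fun x hx => ht.1 x (Multiset.mem_add.2 (Or.inr hx)), by omega⟩
  have hgen : ∀ (I : Finset ℕ) (g : ℕ → ℕ), (∀ y ∈ I, n1 ≤ g y ∧ g y ≤ m) →
      (∀ y ∈ I, ∀ y' ∈ I, g y = g y' → y = y') →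
      ∑ y ∈ I, (MM F (m - g y)).card ≤
        ∑ k ∈ (Finset.range (N + 1)).filter (fun k => n1 ≤ k), (MM F (N - k)).card := by
    intro I g hg hinj
    have : ∑ y ∈ I, (MM F (m - g y)).card = ∑ k ∈ I.image (fun y => n + g y), (MM F (N - k)).card := by
      rw [Finset.sum_image]
      · apply Finset.sum_congr rfl
        intro y hy
        congr 2; omega
      · intro y hy y' hy' h
        exact hinj y hy y' hy' (by simpa using h)
    rw [this]
    apply Finset.sum_le_sum_of_subset
    intro k hk
    obtain ⟨y, hy, rfl⟩ := Finset.mem_image.1 hk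
    have := hg y hy
    rw [Finset.mem_filter, Finset.mem_range]
    omega
  refine (Finset.card_le_card hsub).trans ((Finset.card_union_le _ _).trans ?_)
  rw [two_mul]
  apply add_le_add
  · refine Finset.card_biUnion_le.trans
      ((Finset.sum_le_sum fun y _ => Finset.card_image_le).trans (hgen I (fun y => y) ?_ ?_))
    · intro y hy; exact (Finset.mem_filter.1 hy).2
    · intro y _ y' _ h; exact h
  · refine Finset.card_biUnion_le.trans
      ((Finset.sum_le_sum fun y _ => Finset.card_image_le).trans (hgen J (fun y => n1 * y) ?_ ?_))
    · intro y hy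
      have := (Finset.mem_filter.1 hy).2
      exact ⟨Nat.le_mul_of_pos_right _ this.1, this.2⟩
    · intro y _ y' _ h; exact Nat.eq_of_mul_eq_mul_left h1 h

lemma G_pos (s a L n : ℕ) (hs : 0 < s) (hLs : s + 1 ≤ L) (hsa : s < a) (has : a ≤ s + 3)
    (h1 : L ≠ a) (h2 : L ≠ a + 1) (hn : 9 * (s + 4) ^ 3 ≤ n) :
    ((n : ℤ) ^ 2 - 8 * (s + 4) ^ 3 * n - 3 * (s + 4) ^ 4) ≤
      2 * (s + 4) ^ 4 * (((MM ({s} ∪ {a, a + 1}) (n - s)).card : ℤ)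
        - (MM ({L} ∪ {a, a + 1}) n).card) ∧
    (MM ({L} ∪ {a, a + 1}) n).card ≤ (MM ({s} ∪ {a, a + 1}) (n - s)).card := by
  have hU := U_bound a L (s + 1) n (by omega) (by omega) hLs (by simp [h1, h2])
  have hQ' : a * (a + 1) ≤ (s + 4) * (s + 4) := Nat.mul_le_mul (by omega) (by omega)
  have hbig : s + 2 * ((s + 4) * (s + 4)) ≤ 9 * (s + 4) ^ 3 := by
    ring_nf; nlinarith
  have hV := V_bound a s (n - s) (by omega) hs (by simp; omega) (by omega)
  rw [Nat.cast_sub (by omega)] at hV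
  generalize (MM ({L} ∪ {a, a + 1}) n).card = U at *
  generalize (MM ({s} ∪ {a, a + 1}) (n - s)).card = V at *
  have hQp : 0 < a * (a + 1) := Nat.mul_pos (by omega) (by omega)
  zify at hQ' hn hs hQp ⊢
  push_cast at hU
  generalize (a : ℤ) * (a + 1) = Q at *
  generalize (s : ℤ) = s at *
  generalize (n : ℤ) = n at *
  generalize (U : ℤ) = U at *
  generalize (V : ℤ) = V at *
  have e : (s + 1) * ((n - s) * (n - s - 2 * Q)) - s * ((n + (s + 1)) * (n + (s + 1) + 2 * Q))
      ≤ 2 * s * (s + 1) * Q * (V - U) := by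
    have a1 := mul_le_mul_of_nonneg_left hV (show 0 ≤ s + 1 by omega)
    have a2 := mul_le_mul_of_nonneg_left hU (show 0 ≤ s by omega)
    linarith
  have hw3 : (s + 4) ^ 3 > 0 := by positivity
  have hn0 : 0 ≤ n := by linarith
  have b1 : 4 * s * (s + 1) + (4 * s + 2) * Q ≤ 8 * (s + 4) ^ 3 := by
    have := mul_le_mul_of_nonneg_left hQ' (show 0 ≤ 4 * s + 2 by omega)
    nlinarith
  have b2 : s * (s + 1) * (s + 1 + 2 * Q) ≤ 3 * (s + 4) ^ 4 := by
    have c1 : s * (s + 1) ≤ (s + 4) ^ 2 := by nlinarith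
    have c2 : s + 1 + 2 * Q ≤ 3 * (s + 4) ^ 2 := by nlinarith
    have := mul_le_mul c1 c2 (by nlinarith) (by positivity)
    linarith
  have e2 : n ^ 2 - 8 * (s + 4) ^ 3 * n - 3 * (s + 4) ^ 4 ≤ 2 * s * (s + 1) * Q * (V - U) := by
    refine le_trans ?_ e
    have := mul_le_mul_of_nonneg_right b1 hn0
    have h0 : 0 ≤ (s + 1) * (s * (s + 2 * Q)) := by positivity
    nlinarith
  have e3 : 0 < n ^ 2 - 8 * (s + 4) ^ 3 * n - 3 * (s + 4) ^ 4 := by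
    have h3 : 3 * (s + 4) ^ 4 < (s + 4) ^ 3 * (9 * (s + 4) ^ 3) := by
      have : 0 < (s + 4) ^ 4 * (9 * (s + 4) ^ 2 - 3) := by
        apply mul_pos (by positivity); nlinarith
      nlinarith
    have h4 : (s + 4) ^ 3 * (9 * (s + 4) ^ 3) ≤ n * (s + 4) ^ 3 := by nlinarith
    nlinarith
  have hk : 0 < 2 * s * (s + 1) * Q := by positivity
  have hVU : 0 < V - U := by
    by_contra hc
    push Not at hc
    have := mul_nonpos_of_nonneg_of_nonpos hk.le hc
    linarith
  refine ⟨e2.trans ?_, by linarith⟩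
  apply mul_le_mul_of_nonneg_right _ hVU.le
  have c1 : s * (s + 1) ≤ (s + 4) ^ 2 := by nlinarith
  have := mul_le_mul c1 hQ' hQp.le (by positivity)
  linarith

lemma main_gen (s a L N : ℕ) (hs : 0 < s) (hLs : s + 1 ≤ L) (hsa : s < a) (has : a ≤ s + 3)
    (haL : a + 1 ≤ L + s) (h1 : L ≠ a) (h2 : L ≠ a + 1)
    (hN : (100 * (s + 4) ^ 7) ^ 3 + 9 * (s + 4) ^ 3 ≤ N) :
    (MM (Finset.Icc (s + 1) (L + s)) N).card ≤ (MM (Finset.Icc s (L + s) \ {L}) (N - s)).card := by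
  set F := Finset.Icc (s + 1) (L + s) \ {L, a, a + 1} with hF
  have t1 : Finset.Icc (s + 1) (L + s) = ({L} ∪ {a, a + 1}) ∪ F := by
    ext x
    simp only [hF, Finset.mem_Icc, Finset.mem_union, Finset.mem_sdiff, Finset.mem_insert,
      Finset.mem_singleton]
    omega
  have t2 : Finset.Icc s (L + s) \ {L} = ({s} ∪ {a, a + 1}) ∪ F := by
    ext x
    simp only [hF, Finset.mem_Icc, Finset.mem_union, Finset.mem_sdiff, Finset.mem_insert,
      Finset.mem_singleton]
    omega
  have d1 : Disjoint (({L} ∪ {a, a + 1} : Finset ℕ)) F := by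
    rw [Finset.disjoint_left]
    intro x
    simp only [hF, Finset.mem_Icc, Finset.mem_union, Finset.mem_sdiff, Finset.mem_insert,
      Finset.mem_singleton]
    omega
  have d2 : Disjoint (({s} ∪ {a, a + 1} : Finset ℕ)) F := by
    rw [Finset.disjoint_left]
    intro x
    simp only [hF, Finset.mem_Icc, Finset.mem_union, Finset.mem_sdiff, Finset.mem_insert,
      Finset.mem_singleton]
    omega
  have hw : 1 ≤ (s + 4) ^ 3 := Nat.one_le_pow _ _ (by omega)
  have hw7 : (s + 4) ^ 3 ≤ (s + 4) ^ 7 := Nat.pow_le_pow_right (by omega) (by omega)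
  have hw1 : s + 4 ≤ (s + 4) ^ 3 := Nat.le_self_pow (by omega) _
  have hn13 : 0 < (100 * (s + 4) ^ 7) ^ 3 := by positivity
  rw [t1, t2, card_conv _ _ d1, card_conv _ _ d2,
    Finset.Nat.sum_antidiagonal_eq_sum_range_succ
      (fun i j => (MM ({L} ∪ {a, a + 1}) i).card * (MM F j).card),
    Finset.Nat.sum_antidiagonal_eq_sum_range_succ
      (fun i j => (MM ({s} ∪ {a, a + 1}) i).card * (MM F j).card)]
  let V : ℕ → ℕ := fun n => if s ≤ n then (MM ({s} ∪ {a, a + 1}) (n - s)).card else 0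
  have hV : ∑ n ∈ Finset.range (N - s).succ,
      (MM ({s} ∪ {a, a + 1}) n).card * (MM F (N - s - n)).card
      = ∑ n ∈ Finset.range (N + 1), V n * (MM F (N - n)).card := by
    rw [show N + 1 = s + (N - s).succ by omega, Finset.sum_range_add,
      Finset.sum_eq_zero (s := Finset.range s), zero_add]
    · apply Finset.sum_congr rfl
      intro n _
      simp only [V, if_pos (Nat.le_add_right s n), Nat.add_sub_cancel_left, Nat.sub_sub]
    · intro n hn
      simp only [V, if_neg (not_le.2 (Finset.mem_range.1 hn)), zero_mul]
  rw [hV]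
  apply combine (fun n => (MM ({L} ∪ {a, a + 1}) n).card) V (fun n => (MM F n).card)
    (9 * (s + 4) ^ 3) (100 * (s + 4) ^ 7) (120 * (s + 4) ^ 6) N
  · intro n hn
    have hU := U_bound a L (s + 1) n (by omega) (by omega) hLs (by simp [h1, h2])
    have hQ' : a * (a + 1) ≤ (s + 4) * (s + 4) := Nat.mul_le_mul (by omega) (by omega)
    have hp : 1 ≤ 2 * (s + 1) * (a * (a + 1)) := Nat.succ_le_of_lt
      (Nat.mul_pos (by omega) (Nat.mul_pos (by omega) (by omega)))
    have hq : (s + 4) * (s + 4) ≤ (s + 4) ^ 3 := by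
      rw [← pow_two]; exact Nat.pow_le_pow_right (by omega) (by omega)
    have hU' : 2 * (s + 1) * (a * (a + 1)) * (MM ({L} ∪ {a, a + 1}) n).card
      ≤ (n + (s + 1)) * (n + (s + 1) + 2 * (a * (a + 1))) := by exact_mod_cast hU
    calc (MM ({L} ∪ {a, a + 1}) n).card
        ≤ 2 * (s + 1) * (a * (a + 1)) * (MM ({L} ∪ {a, a + 1}) n).card :=
          Nat.le_mul_of_pos_left _ hp
      _ ≤ _ := hU'
      _ ≤ (10 * (s + 4) ^ 3) * (12 * (s + 4) ^ 3) := Nat.mul_le_mul (by omega) (by omega)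
      _ = _ := by ring
  · intro n hn
    simp only [V]
    rw [if_pos (by omega)]
    exact (G_pos s a L n hs hLs hsa has h1 h2 hn).2
  · intro n hn
    simp only [V]
    rw [if_pos (by omega)]
    have hG := (G_pos s a L n hs hLs hsa has h1 h2 (by omega)).1
    generalize (MM ({L} ∪ {a, a + 1}) n).card = U at *
    generalize (MM ({s} ∪ {a, a + 1}) (n - s)).card = V at *
    zify at hn hw7 hw ⊢
    have hw5 : (5 : ℤ) ≤ s + 4 := by have : (1 : ℤ) ≤ s := by exact_mod_cast hs
                                     linarith
    generalize (s : ℤ) + 4 = w at *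
    generalize (n : ℤ) = n at *
    by_contra hc
    push Not at hc
    have k1 : (V : ℤ) - U ≤ 2160 * w ^ 9 := by linarith
    have k2 := mul_le_mul_of_nonneg_left k1 (show (0 : ℤ) ≤ 2 * w ^ 4 by positivity)
    have k3 : (100 * w ^ 7) * (92 * w ^ 7) ≤ n * (n - 8 * w ^ 3) := by
      apply mul_le_mul hn (by linarith) (by positivity) (by nlinarith)
    have k4 : (9200 : ℤ) * w ^ 14 ≤ 3 * w ^ 4 + 4320 * w ^ 13 := by nlinarith
    have k5 : w ^ 4 ≤ w ^ 14 := pow_le_pow_right₀ (by linarith) (by norm_num)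
    have k6 : w ^ 14 = w * w ^ 13 := by ring
    have k7 : 0 < w ^ 13 := by positivity
    nlinarith
  · omega
  · omega
  · intro n hn
    exact large_bound F _ N n (by positivity) (by omega) (by omega)

lemma main_special (N : ℕ) (hN : 10 ≤ N) :
    (MM (Finset.Icc (1 + 1) (3 + 1)) N).card ≤ (MM (Finset.Icc 1 (3 + 1) \ {3}) (N - 1)).card := by
  classical
  have t1 : Finset.Icc (1 + 1) (3 + 1) = {3} ∪ {2, 4} := by decide
  have t2 : Finset.Icc 1 (3 + 1) \ {3} = {1} ∪ {2, 4} := by decide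
  rw [t1, t2, card_insert_part 3 (by norm_num) _ (by decide),
    card_insert_part 1 (by norm_num) _ (by decide)]
  set f : ℕ → ℕ := fun n => (MM {2, 4} n).card with hf
  have hstep : f N ≤ f (N - 2) + f (N - 4) := by
    have hsub : MM {2, 4} N ⊆ (MM {2, 4} (N - 2)).image (fun t => 2 ::ₘ t) ∪
        (MM {2, 4} (N - 4)).image (fun t => 4 ::ₘ t) := by
      intro t ht
      rw [mem_MM] at ht
      have hne : t ≠ 0 := by rintro rfl; simp at ht; omega
      obtain ⟨y, hy⟩ := Multiset.exists_mem_of_ne_zero hne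
      have hsum := Multiset.sum_erase hy
      have hmem : t.erase y ∈ MM {2, 4} (N - y) := by
        rw [mem_MM]
        exact ⟨fun x hx => ht.1 x (Multiset.mem_of_mem_erase hx), by omega⟩
      have hy2 := (ht.1 y hy).2
      simp only [Finset.mem_insert, Finset.mem_singleton] at hy2
      rw [Finset.mem_union, Finset.mem_image, Finset.mem_image]
      rcases hy2 with rfl | rfl
      · exact Or.inl ⟨_, hmem, Multiset.cons_erase hy⟩
      · exact Or.inr ⟨_, hmem, Multiset.cons_erase hy⟩
    refine (Finset.card_le_card hsub).trans ((Finset.card_union_le _ _).trans ?_)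
    exact add_le_add Finset.card_image_le Finset.card_image_le
  have e1 : ∑ k ∈ Finset.range (N / 3 + 1), (MM {2, 4} (N - k * 3)).card
      = ∑ k ∈ Finset.range (N / 3), f (N - (k + 1) * 3) + f N := by
    rw [Finset.sum_range_succ']; simp [hf]
  rw [e1]
  have e2 : ∑ k ∈ Finset.range ((N - 1) / 1 + 1), (MM {2, 4} (N - 1 - k * 1)).card
      = ∑ k ∈ Finset.range N, f (N - (k + 1)) := by
    rw [Nat.div_one, show N - 1 + 1 = N by omega]
    apply Finset.sum_congr rfl
    intro k _
    simp only [hf]; congr 2; omega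
  rw [e2]
  let I := (Finset.range (N / 3)).image (fun k => k * 3 + 2)
  have e3 : ∑ k ∈ Finset.range (N / 3), f (N - (k + 1) * 3) = ∑ k ∈ I, f (N - (k + 1)) := by
    rw [Finset.sum_image (by intro x _ y _ h; simp only at h; omega)]
    apply Finset.sum_congr rfl
    intro k _
    congr 1; omega
  have e4 : ∑ k ∈ I ∪ {1, 3}, f (N - (k + 1)) ≤ ∑ k ∈ Finset.range N, f (N - (k + 1)) := by
    apply Finset.sum_le_sum_of_subset
    intro k hk
    simp only [I, Finset.mem_union, Finset.mem_image, Finset.mem_range, Finset.mem_insert,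
      Finset.mem_singleton] at hk ⊢
    rcases hk with ⟨x, hx, rfl⟩ | rfl | rfl <;> omega
  rw [Finset.sum_union, Finset.sum_pair (by norm_num)] at e4
  · rw [e3]
    refine le_trans ?_ e4
    have : f (N - (1 + 1)) + f (N - (3 + 1)) = f (N - 2) + f (N - 4) := rfl
    omega
  · rw [Finset.disjoint_left]
    intro k hk
    simp only [I, Finset.mem_image, Finset.mem_range, Finset.mem_insert,
      Finset.mem_singleton] at hk ⊢
    obtain ⟨x, hx, rfl⟩ := hk
    omega

lemma Gamma_big (s : ℕ) (hs : 0 < s) :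
    (100 * (s + 4) ^ 7) ^ 3 + 9 * (s + 4) ^ 3 ≤ GammaS s := by
  unfold GammaS gammaLS
  set L := 3 * s + 2 with hL
  set P := prodP L s with hP
  have hP1 : 10 * (s + 4) ≤ P := by
    have : ∏ i ∈ Finset.range 5, (s + 1 + i) ≤ P := by
      rw [hP]; unfold prodP
      apply Finset.prod_le_prod_of_subset_of_one_le'
      · apply Finset.range_subset_range.2; omega
      · intros; omega
    refine le_trans ?_ this
    simp only [Finset.prod_range_succ, Finset.prod_range_zero]
    obtain ⟨t, rfl⟩ : ∃ t, s = t + 1 := ⟨s - 1, by omega⟩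
    ring_nf
    nlinarith [sq_nonneg t, Nat.zero_le (t^3), Nat.zero_le (t^4), Nat.zero_le (t^5)]
  have hexp : 27 ≤ (P ^ 2 - 1) * L + 2 := by
    have : 27 ≤ P ^ 2 - 1 := by
      have : 50 * 50 ≤ P ^ 2 := by rw [pow_two]; exact Nat.mul_le_mul (by omega) (by omega)
      omega
    nlinarith
  have hsum : 1 ≤ ∑ i ∈ Finset.range L, (s + 1 + i) := by
    have : ∑ i ∈ Finset.range 1, (s + 1 + i) ≤ ∑ i ∈ Finset.range L, (s + 1 + i) :=
      Finset.sum_le_sum_of_subset (Finset.range_subset_range.2 (by omega))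
    simp at this
    omega
  calc (100 * (s + 4) ^ 7) ^ 3 + 9 * (s + 4) ^ 3
      ≤ 10 ^ 6 * (s + 4) ^ 27 + 9 * (s + 4) ^ 27 := by
        have h1 : (s + 4) ^ 21 ≤ (s + 4) ^ 27 := Nat.pow_le_pow_right (by omega) (by omega)
        have h2 : (s + 4) ^ 3 ≤ (s + 4) ^ 27 := Nat.pow_le_pow_right (by omega) (by omega)
        have h3 : (100 * (s + 4) ^ 7) ^ 3 = 10 ^ 6 * (s + 4) ^ 21 := by
          rw [mul_pow, ← pow_mul]; norm_num
        rw [h3]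
        exact add_le_add (Nat.mul_le_mul_left _ h1) (Nat.mul_le_mul_left _ h2)
    _ = (10 ^ 6 + 9) * (s + 4) ^ 27 := by rw [add_mul]
    _ ≤ 10 ^ 27 * (s + 4) ^ 27 := Nat.mul_le_mul_right _ (by norm_num)
    _ = (10 * (s + 4)) ^ 27 := (mul_pow _ _ _).symm
    _ ≤ P ^ 27 := Nat.pow_le_pow_left hP1 _
    _ ≤ P ^ ((P ^ 2 - 1) * L + 2) := Nat.pow_le_pow_right (by omega) hexp
    _ ≤ P ^ ((P ^ 2 - 1) * L + 2) + ((P ^ 2 - 1) * L - 2) * P := Nat.le_add_right _ _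
    _ ≤ _ := Nat.le_mul_of_pos_left _ hsum

theorem stmt_8 (L s : ℕ) (hs : 0 < s) (hL : 3 ≤ L) (hLs : s + 1 ≤ L)
    (N : ℕ) (hN : GammaS s ≤ N) :
    Nat.card {p : N.Partition // InCStar L s p} ≥ Nat.card {p : N.Partition // InD L s p} := by
  have hbig := (Gamma_big s hs).trans hN
  have hw1 : s + 4 ≤ (s + 4) ^ 3 := Nat.le_self_pow (by omega) _
  have hD : Nat.card {p : N.Partition // InD L s p} = (MM (Finset.Icc (s + 1) (L + s)) N).card := by
    rw [card_part_eq (Finset.Icc (s + 1) (L + s)) N _ (fun _ => True)]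
    · simp
    · intro p
      unfold InD
      simp only [Finset.mem_Icc, and_true, and_iff_right_iff_imp]
      intro _ h0
      have := p.parts_sum
      rw [h0] at this
      simp at this
      omega
  have hC : Nat.card {p : N.Partition // InCStar L s p}
      = (MM (Finset.Icc s (L + s) \ {L}) (N - s)).card := by
    rw [card_part_eq (Finset.Icc s (L + s) \ {L}) N _ (fun m => s ∈ m), card_filter_mem _ _ _ hs,
      if_pos (by omega)]
    · simp; omega
    · intro p
      unfold InCStar
      simp only [Finset.mem_sdiff, Finset.mem_Icc, Finset.mem_singleton]
      constructor
      · rintro ⟨h1, h2, h3⟩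
        exact ⟨fun x hx => ⟨h2 x hx, fun h => h3 (h ▸ hx)⟩, h1⟩
      · rintro ⟨h1, h2⟩
        exact ⟨h2, fun x hx => (h1 x hx).1, fun h => (h1 L h).2 rfl⟩
  rw [ge_iff_le, hD, hC]
  by_cases c1 : L = s + 1
  · exact main_gen s (s + 2) L N hs hLs (by omega) (by omega) (by omega) (by omega) (by omega) hbig
  by_cases c2 : L = s + 2
  · by_cases c3 : s = 1
    · subst c3
      subst c2
      exact main_special N (by omega)
    · exact main_gen s (s + 3) L N hs hLs (by omega) (by omega) (by omega) (by omega) (by omega) hbig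
  · exact main_gen s (s + 1) L N hs hLs (by omega) (by omega) (by omega) (by omega) (by omega) hbig
end

section
/- Let L be an integer with L ≥ 11. Then for every positive integer N with N ≠ 3 one has g_L(N) ≥ 0, and g_L(3) ≥ −1. Equivalently, the series G_{L,2}(q) + q^3 has all coefficients nonnegative. -/
/-- Partitions of `N` with smallest part equal to `2` and largest part at most `L+2`. -/
def InSmall2 (L : ℕ) {N : ℕ} (p : N.Partition) : Prop :=
  2 ∈ p.parts ∧ ∀ x ∈ p.parts, 2 ≤ x ∧ x ≤ L + 2

/-- Nonempty partitions of `N` with smallest part at least `3` and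
largest part minus smallest part at most `L`. -/
def InBig3 (L : ℕ) {N : ℕ} (p : N.Partition) : Prop :=
  p.parts ≠ 0 ∧ (∀ x ∈ p.parts, 3 ≤ x) ∧ ∀ x ∈ p.parts, ∀ y ∈ p.parts, x ≤ y + L

/-- `g_L(N)`: the coefficient of `q^N` in `G_{L,2}(q)`. -/
noncomputable def gL (L N : ℕ) : ℤ :=
  (Nat.card {p : N.Partition // InSmall2 L p} : ℤ) -
    (Nat.card {p : N.Partition // InBig3 L p} : ℤ)

namespace BU

/-- Multisets of positive integers with sum `N`. -/
def T (N : ℕ) : Set (Multiset ℕ) := {s | (∀ x ∈ s, 0 < x) ∧ s.sum = N}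

def A (L N : ℕ) : Set (Multiset ℕ) :=
  {s | 2 ∈ s ∧ (∀ x ∈ s, 2 ≤ x ∧ x ≤ L + 2) ∧ s.sum = N}

def B (L N : ℕ) : Set (Multiset ℕ) :=
  {s | s ≠ 0 ∧ (∀ x ∈ s, 3 ≤ x) ∧ (∀ x ∈ s, ∀ y ∈ s, x ≤ y + L) ∧ s.sum = N}

/-- Sorted lists with entries in `[3, L+2]` and sum `N`. -/
def P (L N : ℕ) : Set (List ℕ) :=
  {l | l.Pairwise (· ≤ ·) ∧ (∀ x ∈ l, 3 ≤ x ∧ x ≤ L + 2) ∧ l.sum = N}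

theorem T_finite (N : ℕ) : (T N).Finite := by
  have : T N ⊆ Set.range (fun p : N.Partition => p.parts) := by
    rintro s ⟨h1, h2⟩
    exact ⟨⟨s, fun {i} hi => h1 i hi, h2⟩, rfl⟩
  exact (Set.finite_range _).subset this

theorem A_finite (L N : ℕ) : (A L N).Finite := by
  refine (T_finite N).subset ?_
  rintro s ⟨_, h2, h3⟩
  exact ⟨fun x hx => by have := h2 x hx; omega, h3⟩

theorem B_finite (L N : ℕ) : (B L N).Finite := by
  refine (T_finite N).subset ?_
  rintro s ⟨_, h2, _, h3⟩
  exact ⟨fun x hx => by have := h2 x hx; omega, h3⟩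

theorem sorted_ext {l m : List ℕ} (hl : l.Pairwise (· ≤ ·)) (hm : m.Pairwise (· ≤ ·))
    (h : (l : Multiset ℕ) = m) : l = m := by
  have hp : l.Perm m := Multiset.coe_eq_coe.1 h
  exact hp.eq_of_pairwise (fun a b _ _ h1 h2 => le_antisymm h1 h2) hl hm

theorem P_finite (L N : ℕ) : (P L N).Finite := by
  refine Set.Finite.of_injOn (f := fun l : List ℕ => (l : Multiset ℕ)) (t := T N) ?_ ?_ (T_finite N)
  · rintro l ⟨_, h2, h3⟩
    refine ⟨fun x hx => ?_, by simpa using h3⟩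
    have := h2 x (by simpa using hx); omega
  · rintro l hl m hm h
    exact sorted_ext hl.1 hm.1 h

noncomputable def p (L N : ℕ) : ℕ := (P L N).ncard

noncomputable def a (L : ℕ) : ℕ → ℕ
  | 0 => 0
  | 1 => 0
  | n + 2 => a L n + p L n

theorem cardA (L N : ℕ) :
    Nat.card {q : N.Partition // InSmall2 L q} = (A L N).ncard := by
  rw [← Nat.card_coe_set_eq]
  refine Nat.card_congr
    { toFun := fun q => ⟨q.1.parts, q.2.1, q.2.2, q.1.parts_sum⟩
      invFun := fun s => ⟨⟨s.1, fun {i} hi => by have := s.2.2.1 i hi; omega, s.2.2.2⟩,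
        s.2.1, s.2.2.1⟩
      left_inv := fun q => by rfl
      right_inv := fun s => by rfl }

theorem cardB (L N : ℕ) :
    Nat.card {q : N.Partition // InBig3 L q} = (B L N).ncard := by
  rw [← Nat.card_coe_set_eq]
  refine Nat.card_congr
    { toFun := fun q => ⟨q.1.parts, q.2.1, q.2.2.1, q.2.2.2, q.1.parts_sum⟩
      invFun := fun s => ⟨⟨s.1, fun {i} hi => by have := s.2.2.1 i hi; omega, s.2.2.2.2⟩,
        s.2.1, s.2.2.1, s.2.2.2.1⟩
      left_inv := fun q => by rfl
      right_inv := fun s => by rfl }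

theorem A_step (L N : ℕ) : (A L N).ncard + p L N ≤ (A L (N + 2)).ncard := by
  have e1 : ((fun s : Multiset ℕ => 2 ::ₘ s) '' A L N).ncard = (A L N).ncard :=
    Set.ncard_image_of_injective _ (fun s t h => by simpa using h)
  have e2 : ((fun l : List ℕ => 2 ::ₘ (l : Multiset ℕ)) '' P L N).ncard = p L N := by
    refine Set.InjOn.ncard_image ?_
    rintro l hl m hm h
    exact sorted_ext hl.1 hm.1 ((Multiset.cons_inj_right 2).1 h)
  rw [← e1, ← e2, ← Set.ncard_union_eq _ ((A_finite L N).image _) ((P_finite L N).image _)]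
  · refine Set.ncard_le_ncard ?_ (A_finite L _)
    rintro s (⟨t, ⟨h1, h2, h3⟩, rfl⟩ | ⟨l, ⟨h1, h2, h3⟩, rfl⟩)
    · refine ⟨by simp, ?_, by simp [h3, add_comm]⟩
      intro x hx
      rcases Multiset.mem_cons.1 hx with rfl | hx
      · omega
      · exact h2 x hx
    · refine ⟨by simp, ?_, by simp [h3, add_comm]⟩
      intro x hx
      rcases Multiset.mem_cons.1 hx with rfl | hx
      · omega
      · have := h2 x (by simpa using hx); omega
  · rw [Set.disjoint_left]
    rintro s ⟨t, ⟨h1, h2, h3⟩, rfl⟩ ⟨l, ⟨g1, g2, g3⟩, h⟩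
    have h' : (l : Multiset ℕ) = t := (Multiset.cons_inj_right 2).1 h
    rw [← h'] at h1
    have := g2 2 (by simpa using h1)
    omega

theorem a_le_A (L : ℕ) : ∀ N, a L N ≤ (A L N).ncard
  | 0 => by simp [a]
  | 1 => by simp [a]
  | n + 2 => by
    have := a_le_A L n
    have := A_step L n
    simp only [a]; omega

theorem B_step (L N : ℕ) :
    (B L N).ncard ≤ p L N + (if L < N then (B L (N - L)).ncard else 0) := by
  classical
  set B1 := {s ∈ B L N | ∀ x ∈ s, x ≤ L + 2} with hB1
  set B2 := {s ∈ B L N | ∃ x ∈ s, L + 2 < x} with hB2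
  have hsub : B L N ⊆ B1 ∪ B2 := by
    intro s hs
    by_cases h : ∀ x ∈ s, x ≤ L + 2
    · exact Or.inl ⟨hs, h⟩
    · push Not at h
      exact Or.inr ⟨hs, h⟩
  have f1 : B1.Finite := (B_finite L N).subset (fun s hs => hs.1)
  have f2 : B2.Finite := (B_finite L N).subset (fun s hs => hs.1)
  have h1 : B1.ncard ≤ p L N := by
    refine Set.ncard_le_ncard_of_injOn (fun s : Multiset ℕ => s.sort (· ≤ ·)) ?_ ?_ (P_finite L N)
    · rintro s ⟨⟨_, h2, _, h4⟩, h5⟩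
      refine ⟨Multiset.pairwise_sort _ _, ?_, ?_⟩
      · intro x hx
        rw [Multiset.mem_sort] at hx
        exact ⟨h2 x hx, h5 x hx⟩
      · rw [← Multiset.sum_coe, Multiset.sort_eq, h4]
    · intro s _ t _ h
      have := congrArg (fun l : List ℕ => (l : Multiset ℕ)) h
      simpa using this
  have h2 : B2.ncard ≤ (if L < N then (B L (N - L)).ncard else 0) := by
    have key : ∀ s ∈ B2, ∃ M ∈ s, L + 2 < M ∧ ∀ x ∈ s, x ≤ M := by
      rintro s ⟨_, x, hx, hlt⟩
      obtain ⟨M, hM, hmax⟩ := s.toFinset.exists_max_image id ⟨x, by simpa using hx⟩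
      simp only [Multiset.mem_toFinset, id] at hM hmax
      exact ⟨M, hM, lt_of_lt_of_le hlt (hmax x hx), hmax⟩
    split_ifs with hLN
    · choose! M hM1 hM2 hM3 using key
      have mem_new : ∀ s ∈ B2, ∀ x ∈ (M s - L) ::ₘ s.erase (M s), M s - L ≤ x ∧ x ≤ M s := by
        intro s hs x hx
        rcases Multiset.mem_cons.1 hx with rfl | hx
        · omega
        · have hx := Multiset.mem_of_mem_erase hx
          have := hs.1.2.2.1 _ (hM1 s hs) x hx
          have := hM3 s hs x hx
          omega
      refine Set.ncard_le_ncard_of_injOn (fun s => (M s - L) ::ₘ s.erase (M s)) ?_ ?_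
        (B_finite L _)
      · intro s hs
        have m1 := hM1 s hs
        have m2 := hM2 s hs
        refine ⟨by simp, ?_, ?_, ?_⟩
        · intro x hx
          have := mem_new s hs x hx; omega
        · intro x hx y hy
          have := mem_new s hs x hx
          have := mem_new s hs y hy; omega
        · have e : M s + (s.erase (M s)).sum = N := by
            rw [← Multiset.sum_cons, Multiset.cons_erase m1]; exact hs.1.2.2.2
          rw [Multiset.sum_cons]; omega
      · intro s hs t ht h
        simp only at h
        have i1 := mem_new s hs (M t - L) (by rw [h]; simp)
        have i2 := mem_new t ht (M s - L) (by rw [← h]; simp)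
        have m2 := hM2 s hs
        have m2' := hM2 t ht
        have e : M s = M t := by omega
        rw [e] at h
        have h' := (Multiset.cons_inj_right _).1 h
        have hs' := Multiset.cons_erase (hM1 s hs)
        rw [e, h', Multiset.cons_erase (hM1 t ht)] at hs'
        exact hs'.symm
    · have : B2 = ∅ := by
        ext s
        simp only [Set.mem_empty_iff_false, iff_false]
        intro hs
        obtain ⟨M, h1, h2, _⟩ := key s hs
        have := Multiset.le_sum_of_mem h1
        rw [hs.1.2.2.2] at this
        omega
      simp [this]
  calc (B L N).ncard ≤ (B1 ∪ B2).ncard := Set.ncard_le_ncard hsub (f1.union f2)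
    _ ≤ B1.ncard + B2.ncard := Set.ncard_union_le _ _
    _ ≤ _ := by omega

/-- The injection: tag and remaining sorted list. -/
def phi : List ℕ → ℕ × List ℕ
  | [] => (0, [])
  | x :: v =>
    if x = 3 then
      match v with
      | [] => (0, [])
      | y :: w =>
        if y = 3 then (6, w)
        else if y = 4 then
          match w with
          | [] => (4, [3])
          | z :: u => (8, (z - 1) :: u)
        else if y = 5 then (2, 3 :: 3 :: w)
        else if y = 6 then (2, 3 :: 4 :: w)
        else (4, 3 :: (y - 4) :: w)
    else if x = 4 then (4, v)
    else (2, (x - 2) :: v)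

theorem phi_cases (L N : ℕ) (hN : N ≠ 0) (hN3 : N ≠ 3) (l : List ℕ) (hl : l ∈ P L N) :
    (∃ w, l = 3 :: 3 :: w ∧ phi l = (6, w)) ∨
    (l = [3, 4] ∧ phi l = (4, [3])) ∨
    (∃ z u, l = 3 :: 4 :: z :: u ∧ 4 ≤ z ∧ phi l = (8, (z - 1) :: u)) ∨
    (∃ w, l = 3 :: 5 :: w ∧ (∀ x ∈ w, 5 ≤ x) ∧ phi l = (2, 3 :: 3 :: w)) ∨
    (∃ w, l = 3 :: 6 :: w ∧ (∀ x ∈ w, 6 ≤ x) ∧ phi l = (2, 3 :: 4 :: w)) ∨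
    (∃ y w, l = 3 :: y :: w ∧ 7 ≤ y ∧ (∀ x ∈ w, y ≤ x) ∧ phi l = (4, 3 :: (y - 4) :: w)) ∨
    (∃ v, l = 4 :: v ∧ (∀ x ∈ v, 4 ≤ x) ∧ phi l = (4, v)) ∨
    (∃ x v, l = x :: v ∧ 5 ≤ x ∧ (∀ y ∈ v, x ≤ y) ∧ phi l = (2, (x - 2) :: v)) := by
  obtain ⟨h1, h2, h3⟩ := hl
  rcases l with _ | ⟨x, v⟩
  · simp at h3; omega
  rw [List.pairwise_cons] at h1
  have hx := h2 x (by simp)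
  by_cases x3 : x = 3
  · subst x3
    rcases v with _ | ⟨y, w⟩
    · simp at h3; omega
    obtain ⟨-, h1⟩ := h1
    rw [List.pairwise_cons] at h1
    have hy := h2 y (by simp)
    by_cases y3 : y = 3
    · subst y3
      exact Or.inl ⟨w, rfl, by simp [phi]⟩
    by_cases y4 : y = 4
    · subst y4
      rcases w with _ | ⟨z, u⟩
      · exact Or.inr (Or.inl ⟨rfl, by simp [phi]⟩)
      · exact Or.inr (Or.inr (Or.inl ⟨z, u, rfl, h1.1 z (by simp), by simp [phi]⟩))
    by_cases y5 : y = 5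
    · subst y5
      exact Or.inr (Or.inr (Or.inr (Or.inl ⟨w, rfl, h1.1, by simp [phi]⟩)))
    by_cases y6 : y = 6
    · subst y6
      exact Or.inr (Or.inr (Or.inr (Or.inr (Or.inl ⟨w, rfl, h1.1, by simp [phi]⟩))))
    · exact Or.inr (Or.inr (Or.inr (Or.inr (Or.inr (Or.inl
        ⟨y, w, rfl, by omega, h1.1, by simp [phi, y3, y4, y5, y6]⟩)))))
  by_cases x4 : x = 4
  · subst x4
    exact Or.inr (Or.inr (Or.inr (Or.inr (Or.inr (Or.inr (Or.inl
      ⟨v, rfl, h1.1, by simp [phi]⟩))))))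
  · exact Or.inr (Or.inr (Or.inr (Or.inr (Or.inr (Or.inr (Or.inr
      ⟨x, v, rfl, by omega, h1.1, by simp [phi, x3, x4]⟩))))))

theorem phi_spec (L N : ℕ) (hN : N ≠ 0) (hN3 : N ≠ 3) (l : List ℕ) (hl : l ∈ P L N) :
    ((phi l).1 = 2 ∨ (phi l).1 = 4 ∨ (phi l).1 = 6 ∨ (phi l).1 = 8) ∧
    (phi l).1 ≤ N ∧ (phi l).2 ∈ P L (N - (phi l).1) := by
  have hc := phi_cases L N hN hN3 l hl
  obtain ⟨h1, h2, h3⟩ := hl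
  rcases hc with ⟨w, rfl, e⟩ | ⟨rfl, e⟩ | ⟨z, u, rfl, hz, e⟩ | ⟨w, rfl, hw, e⟩ | ⟨w, rfl, hw, e⟩ |
    ⟨y, w, rfl, hy, hw, e⟩ | ⟨v, rfl, hv, e⟩ | ⟨x, v, rfl, hx, hv, e⟩ <;>
  rw [e] <;>
  simp only [List.pairwise_cons, List.mem_cons, List.sum_cons, forall_eq_or_imp] at h1 h2 h3 <;>
  refine ⟨by simp, by omega, ?_, ?_, ?_⟩ <;>
  simp only [List.pairwise_cons, List.mem_cons, List.sum_cons, forall_eq_or_imp] <;>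
  first | omega | grind

theorem phi_inj (L N : ℕ) (hN : N ≠ 0) (hN3 : N ≠ 3) : Set.InjOn phi (P L N) := by
  intro l hl m hm h
  have hc := phi_cases L N hN hN3 l hl
  have hd := phi_cases L N hN hN3 m hm
  clear hl hm
  rcases hc with ⟨w, rfl, e⟩ | ⟨rfl, e⟩ | ⟨z, u, rfl, hz, e⟩ | ⟨w, rfl, hw, e⟩ | ⟨w, rfl, hw, e⟩ |
    ⟨y, w, rfl, hy, hw, e⟩ | ⟨v, rfl, hv, e⟩ | ⟨x, v, rfl, hx, hv, e⟩ <;>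
  rcases hd with ⟨w', rfl, e'⟩ | ⟨rfl, e'⟩ | ⟨z', u', rfl, hz', e'⟩ | ⟨w', rfl, hw', e'⟩ |
    ⟨w', rfl, hw', e'⟩ | ⟨y', w', rfl, hy', hw', e'⟩ | ⟨v', rfl, hv', e'⟩ |
    ⟨x', v', rfl, hx', hv', e'⟩ <;>
  replace h := e.symm.trans (h.trans e') <;> clear e e' <;>
  first
  | grind
  | (simp only [Prod.mk.injEq, List.cons.injEq, true_and] at h
     first
     | subst h
     | (obtain ⟨h, rfl⟩ := h)
     simp only [List.mem_cons, forall_eq_or_imp] at *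
     omega)

theorem p_le (L N : ℕ) (hN : N ≠ 0) (hN3 : N ≠ 3) :
    p L N ≤ (if 2 ≤ N then p L (N - 2) else 0) + (if 4 ≤ N then p L (N - 4) else 0)
      + (if 6 ≤ N then p L (N - 6) else 0) + (if 8 ≤ N then p L (N - 8) else 0) := by
  have hf : ∀ t, {l ∈ P L N | (phi l).1 = t}.Finite :=
    fun t => (P_finite L N).subset (fun l hl => hl.1)
  have key : ∀ t, {l ∈ P L N | (phi l).1 = t}.ncard ≤ (if t ≤ N then p L (N - t) else 0) := by
    intro t
    split_ifs with ht
    · refine Set.ncard_le_ncard_of_injOn (fun l => (phi l).2) ?_ ?_ (P_finite L _)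
      · rintro l ⟨hl, rfl⟩
        exact (phi_spec L N hN hN3 l hl).2.2
      · rintro l ⟨hl, e⟩ m ⟨hm, e'⟩ h
        exact phi_inj L N hN hN3 hl hm (Prod.ext (e.trans e'.symm) h)
    · have : {l ∈ P L N | (phi l).1 = t} = ∅ := by
        ext l
        simp only [Set.mem_ofPred_eq, Set.mem_empty_iff_false, iff_false]
        rintro ⟨hl, rfl⟩
        exact ht (phi_spec L N hN hN3 l hl).2.1
      simp [this]
  have hsub : P L N ⊆ (({l ∈ P L N | (phi l).1 = 2} ∪ {l ∈ P L N | (phi l).1 = 4}) ∪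
      {l ∈ P L N | (phi l).1 = 6}) ∪ {l ∈ P L N | (phi l).1 = 8} := by
    intro l hl
    have := (phi_spec L N hN hN3 l hl).1
    simp only [Set.mem_union, Set.mem_ofPred_eq]
    tauto
  have h0 := Set.ncard_le_ncard hsub ((((hf 2).union (hf 4)).union (hf 6)).union (hf 8))
  have u1 := Set.ncard_union_le (({l ∈ P L N | (phi l).1 = 2} ∪ {l ∈ P L N | (phi l).1 = 4}) ∪
      {l ∈ P L N | (phi l).1 = 6}) {l ∈ P L N | (phi l).1 = 8}
  have u2 := Set.ncard_union_le ({l ∈ P L N | (phi l).1 = 2} ∪ {l ∈ P L N | (phi l).1 = 4})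
      {l ∈ P L N | (phi l).1 = 6}
  have u3 := Set.ncard_union_le {l ∈ P L N | (phi l).1 = 2} {l ∈ P L N | (phi l).1 = 4}
  have k2 := key 2
  have k4 := key 4
  have k6 := key 6
  have k8 := key 8
  unfold p at *
  omega

theorem p_mono3 (L N : ℕ) (hL : 1 ≤ L) : p L N ≤ p L (N + 3) := by
  refine Set.ncard_le_ncard_of_injOn (fun l => 3 :: l) ?_ ?_ (P_finite L _)
  · rintro l ⟨h1, h2, h3⟩
    refine ⟨List.pairwise_cons.2 ⟨fun x hx => (h2 x hx).1, h1⟩, ?_, by simp [h3, add_comm]⟩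
    intro x hx
    rcases List.mem_cons.1 hx with rfl | hx
    · omega
    · exact h2 x hx
  · intro l _ m _ h
    simpa using h

theorem a_mono3 (L : ℕ) (hL : 1 ≤ L) : ∀ N, a L N ≤ a L (N + 3)
  | 0 => by simp [a]
  | 1 => by simp [a]
  | n + 2 => by
    have h1 := a_mono3 L hL n
    have h2 := p_mono3 L n hL
    show a L n + p L n ≤ a L (n + 3) + p L (n + 3)
    omega

theorem a_mono2 (L N : ℕ) : a L N ≤ a L (N + 2) := by simp [a]

theorem a_mono (L N : ℕ) (hL : 1 ≤ L) : ∀ m, a L N ≤ a L (N + (m + 2))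
  | 0 => a_mono2 L N
  | 1 => a_mono3 L hL N
  | m + 2 => (a_mono L N hL m).trans (a_mono2 L _)

theorem p_zero (L : ℕ) : 1 ≤ p L 0 := by
  have : ({[]} : Set (List ℕ)) ⊆ P L 0 := by
    rintro l rfl
    exact ⟨List.Pairwise.nil, by simp, by simp⟩
  simpa [p] using Set.ncard_le_ncard this (P_finite L 0)

theorem p_one (L : ℕ) : p L 1 = 0 := by
  have : P L 1 = ∅ := by
    ext l
    simp only [Set.mem_empty_iff_false, iff_false]
    rintro ⟨h1, h2, h3⟩
    rcases l with _ | ⟨x, l⟩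
    · simp at h3
    · have := h2 x (by simp)
      simp at h3; omega
  simp [p, this]

theorem p_three (L : ℕ) : p L 3 ≤ 1 := by
  have : P L 3 ⊆ {[3]} := by
    rintro l ⟨h1, h2, h3⟩
    rcases l with _ | ⟨x, _ | ⟨y, l⟩⟩
    · simp at h3
    · simpa using h3
    · have := h2 x (by simp)
      have := h2 y (by simp)
      simp at h3; omega
  simpa [p] using Set.ncard_le_ncard this (Set.finite_singleton _)

theorem a_ge (L N : ℕ) (hN : N ≠ 0) (hN3 : N ≠ 3) :
    p L N + (if 8 ≤ N then a L (N - 8) else 0) ≤ a L N := by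
  have h := p_le L N hN hN3
  rcases lt_or_ge N 8 with h8 | h8
  · interval_cases N <;> simp [a] at h ⊢ <;> omega
  · obtain ⟨n, rfl⟩ := Nat.exists_eq_add_of_le' h8
    have e : a L (n + 8) = a L n + p L n + p L (n + 2) + p L (n + 4) + p L (n + 6) := rfl
    have e2 : n + 8 - 2 = n + 6 := by omega
    have e4 : n + 8 - 4 = n + 4 := by omega
    have e6 : n + 8 - 6 = n + 2 := by omega
    have e8 : n + 8 - 8 = n := by omega
    rw [if_pos (by omega), if_pos (by omega), if_pos (by omega), if_pos (by omega),
      e2, e4, e6, e8] at h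
    rw [if_pos (by omega), e8, e]
    omega

theorem B_le_a (L : ℕ) (hL : 11 ≤ L) (N : ℕ) (hN : N ≠ 0) (hN3 : N ≠ 3) :
    (B L N).ncard ≤ a L N := by
  induction N using Nat.strong_induction_on with
  | _ N ih =>
    have h1 := B_step L N
    have h2 := a_ge L N hN hN3
    split_ifs at h1 with hLN
    · rw [if_pos (by omega)] at h2
      by_cases h3 : N - L = 3
      · have h4 := B_step L 3
        rw [if_neg (by omega)] at h4
        have h5 := p_three L
        have h6 := a_mono L 4 (by omega) (N - 8 - 6)
        have e : 4 + (N - 8 - 6 + 2) = N - 8 := by omega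
        rw [e] at h6
        have h7 : a L 4 = 0 + p L 0 + p L 2 := rfl
        have := p_zero L
        rw [h3] at h1
        omega
      · have h4 := ih (N - L) (by omega) (by omega) h3
        have h6 := a_mono L (N - L) (by omega) (L - 10)
        have e : N - L + (L - 10 + 2) = N - 8 := by omega
        rw [e] at h6
        omega
    · omega

end BU

theorem stmt_13 (L : ℕ) (hL : 11 ≤ L) :
    (∀ N : ℕ, 0 < N → N ≠ 3 → 0 ≤ gL L N) ∧ -1 ≤ gL L 3 := by
  unfold gL
  constructor
  · intro N hN hN3
    rw [BU.cardA, BU.cardB]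
    have h1 := BU.a_le_A L N
    have h2 := BU.B_le_a L hL N (by omega) hN3
    omega
  · rw [BU.cardA, BU.cardB]
    have h1 := BU.B_step L 3
    rw [if_neg (by omega)] at h1
    have h2 := BU.p_three L
    omega
end

section
/- Let L be an integer with 5 ≤ L ≤ 10. Then for every positive integer N with N ≠ 3 one has g_L(N) ≥ 0, and g_L(3) ≥ −1. Equivalently, the series G_{L,2}(q) + q^3 has all coefficients nonnegative. -/
/-- Number of partitions of `n` with all parts in `S`. -/
def cS (S : Finset ℕ) (n : ℕ) : ℕ :=
  (Finset.univ.filter fun p : n.Partition => ∀ i ∈ p.parts, i ∈ S).card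

/-- Number of partitions of `n` with all parts in `S`, containing `s`. -/
def cSs (S : Finset ℕ) (s n : ℕ) : ℕ :=
  (Finset.univ.filter fun p : n.Partition => s ∈ p.parts ∧ ∀ i ∈ p.parts, i ∈ S).card

lemma cS_split (S : Finset ℕ) (s n : ℕ) : cS S n = cS (S.erase s) n + cSs S s n := by
  unfold cS cSs
  rw [add_comm, ← Finset.card_union_of_disjoint]
  · congr 1
    ext p
    simp only [Finset.mem_filter, Finset.mem_univ, true_and, Finset.mem_union, Finset.mem_erase]
    constructor
    · intro h
      by_cases hs : s ∈ p.parts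
      · exact Or.inl ⟨hs, h⟩
      · exact Or.inr fun i hi => ⟨fun e => hs (e ▸ hi), h i hi⟩
    · rintro (h | h)
      · exact h.2
      · exact fun i hi => (h i hi).2
  · rw [Finset.disjoint_filter]
    intro p _ h1 h2
    have := h2 s h1.1
    simp at this

lemma part_le {n : ℕ} (p : n.Partition) {s : ℕ} (h : s ∈ p.parts) : s ≤ n := by
  have := Multiset.single_le_sum (fun _ _ => Nat.zero_le _) s h
  rwa [p.parts_sum] at this

lemma cSs_lt (S : Finset ℕ) (s n : ℕ) (h : n < s) : cSs S s n = 0 := by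
  unfold cSs
  rw [Finset.card_eq_zero, Finset.filter_eq_empty_iff]
  intro p _ hp
  have := part_le p hp.1
  omega

lemma cSs_add (S : Finset ℕ) (s m : ℕ) (hs : 0 < s) (hS : s ∈ S) : cSs S s (m + s) = cS S m := by
  unfold cSs cS
  symm
  refine Finset.card_bij
    (fun p _ => (⟨s ::ₘ p.parts, ?_, ?_⟩ : (m + s).Partition)) ?_ ?_ ?_
  · intro i hi
    rcases Multiset.mem_cons.1 hi with rfl | hi
    · exact hs
    · exact p.parts_pos hi
  · rw [Multiset.sum_cons, p.parts_sum, add_comm]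
  · intro p hp
    simp only [Finset.mem_filter, Finset.mem_univ, true_and] at hp ⊢
    refine ⟨Multiset.mem_cons_self _ _, ?_⟩
    intro i hi
    rcases Multiset.mem_cons.1 hi with rfl | hi
    · exact hS
    · exact hp i hi
  · intro p _ q _ h
    have h' := congrArg Nat.Partition.parts h
    simp only [Multiset.cons_inj_right] at h'
    exact Nat.Partition.ext h'
  · intro q hq
    simp only [Finset.mem_filter, Finset.mem_univ, true_and] at hq
    refine ⟨⟨q.parts.erase s, fun hi => q.parts_pos (Multiset.mem_of_mem_erase hi), ?_⟩, ?_, ?_⟩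
    · have h1 := q.parts_sum
      rw [← Multiset.cons_erase hq.1, Multiset.sum_cons] at h1
      omega
    · simp only [Finset.mem_filter, Finset.mem_univ, true_and]
      exact fun i hi => hq.2 i (Multiset.mem_of_mem_erase hi)
    · exact Nat.Partition.ext (Multiset.cons_erase hq.1)

open PowerSeries in
/-- Generating function of partitions with parts in `S`. -/
noncomputable def PS (S : Finset ℕ) : PowerSeries ℤ := PowerSeries.mk fun n => (cS S n : ℤ)

open PowerSeries in
lemma coeff_X_PS (S : Finset ℕ) (s n : ℕ) (hs : 0 < s) (hS : s ∈ S) :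
    coeff n (PS S * X ^ s) = (cSs S s n : ℤ) := by
  rw [coeff_mul_X_pow']
  split_ifs with h
  · obtain ⟨m, rfl⟩ := Nat.exists_eq_add_of_le' h
    rw [cSs_add S s m hs hS]
    simp [PS]
  · rw [cSs_lt _ _ _ (by omega)]
    simp

open PowerSeries in
lemma PS_mul (S : Finset ℕ) (s : ℕ) (hs : 0 < s) (hS : s ∈ S) :
    PS S * (1 - X ^ s) = PS (S.erase s) := by
  ext n
  rw [mul_sub, mul_one, map_sub, coeff_X_PS S s n hs hS]
  simp only [PS, coeff_mk]
  rw [cS_split S s n]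
  push_cast
  ring

lemma PS_low (a b : ℕ) (ha : 0 < a) (h : a ≤ b) :
    PS (Finset.Icc a b) * (1 - PowerSeries.X ^ a) = PS (Finset.Icc (a + 1) b) := by
  rw [PS_mul _ _ ha (by simp [h])]
  congr 1
  ext i
  simp only [Finset.mem_erase, Finset.mem_Icc]
  omega

lemma PS_high (a b : ℕ) (h : a ≤ b + 1) :
    PS (Finset.Icc a (b + 1)) * (1 - PowerSeries.X ^ (b + 1)) = PS (Finset.Icc a b) := by
  rw [PS_mul _ _ (by omega) (by simp [h])]
  congr 1
  ext i
  simp only [Finset.mem_erase, Finset.mem_Icc]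
  omega

lemma cS_far (S : Finset ℕ) (n : ℕ) (h : ∀ i ∈ S, n < i) : cS S n = if n = 0 then 1 else 0 := by
  unfold cS
  split_ifs with h0
  · subst h0
    rw [Finset.filter_true_of_mem]
    · simp
    · intro p _ i hi
      have := part_le p hi
      have := p.parts_pos hi
      omega
  · rw [Finset.card_eq_zero, Finset.filter_eq_empty_iff]
    intro p _ hp
    have : p.parts ≠ 0 := by
      intro e
      have := p.parts_sum
      rw [e] at this
      simp at this
      omega
    obtain ⟨i, hi⟩ := Multiset.exists_mem_of_ne_zero this
    have := part_le p hi
    have := h i (hp i hi)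
    omega

/-- Number of partitions satisfying `InBig3`. -/
noncomputable def bN (L n : ℕ) : ℕ := Nat.card {p : n.Partition // InBig3 L p}

lemma bN_eq (L n K : ℕ) (hK : n ≤ K) :
    bN L n = ∑ s ∈ Finset.Icc 3 K, cSs (Finset.Icc s (s + L)) s n := by
  classical
  unfold bN cSs
  rw [Nat.card_eq_fintype_card, Fintype.card_subtype, ← Finset.card_biUnion]
  · congr 1
    ext p
    simp only [Finset.mem_filter, Finset.mem_univ, true_and, Finset.mem_biUnion, Finset.mem_Icc]
    constructor
    · rintro ⟨h0, h3, hL⟩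
      have hne : p.parts.toFinset.Nonempty := by
        obtain ⟨i, hi⟩ := Multiset.exists_mem_of_ne_zero h0
        exact ⟨i, by simpa using hi⟩
      have hmem : p.parts.toFinset.min' hne ∈ p.parts := by
        simpa using Finset.min'_mem _ hne
      refine ⟨p.parts.toFinset.min' hne, ⟨h3 _ hmem, (part_le p hmem).trans hK⟩, hmem, ?_⟩
      intro i hi
      exact ⟨Finset.min'_le _ _ (by simpa using hi), hL _ hi _ hmem⟩
    · rintro ⟨s, ⟨hs3, _⟩, hs, h⟩
      refine ⟨?_, fun x hx => hs3.trans (h x hx).1, fun x hx y hy => ?_⟩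
      · intro e
        simp [e] at hs
      · have := h x hx
        have := h y hy
        omega
  · intro s _ t _ hst
    rw [Function.onFun, Finset.disjoint_filter]
    intro p _ h1 h2
    have a := h1.2 t h2.1
    have b := h2.2 s h1.1
    simp only [Finset.mem_Icc] at a b
    omega

open PowerSeries in
lemma tele (L K : ℕ) (hL : 1 ≤ L) :
    (∑ s ∈ Finset.Icc 3 (K + 2), PS (Finset.Icc s (s + L)) * X ^ s) * (1 - X ^ L) =
      PS (Finset.Icc 3 (L + 2)) - PS (Finset.Icc (K + 3) (K + 2 + L)) := by
  induction K with
  | zero => simp [add_comm]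
  | succ K ih =>
    rw [show K + 1 + 2 = (K + 2) + 1 from by ring, Finset.sum_Icc_succ_top (by omega), add_mul, ih]
    have h1 := PS_low (K + 3) (K + 3 + L) (by omega) (by omega)
    have h2 := PS_high (K + 3) (K + 2 + L) (by omega)
    rw [show K + 2 + L + 1 = K + 3 + L from by ring] at h2
    rw [show K + 2 + 1 = K + 3 from by ring, show K + 1 + 3 = K + 3 + 1 from by ring, ← h1, ← h2,
      pow_add]
    ring

open PowerSeries in
lemma coeff_congr (F G : PowerSeries ℤ) (L n : ℕ) (h : ∀ m ≤ n, coeff m F = coeff m G) :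
    coeff n (F * (1 - X ^ L)) = coeff n (G * (1 - X ^ L)) := by
  rw [mul_sub, mul_sub, mul_one, mul_one, map_sub, map_sub, coeff_mul_X_pow', coeff_mul_X_pow',
    h n le_rfl, h (n - L) (by omega)]

open PowerSeries in
lemma big_series (L : ℕ) (hL : 1 ≤ L) :
    (PowerSeries.mk fun n => (bN L n : ℤ)) * (1 - X ^ L) = PS (Finset.Icc 3 (L + 2)) - 1 := by
  ext n
  rw [coeff_congr _ (∑ s ∈ Finset.Icc 3 (n + 2), PS (Finset.Icc s (s + L)) * X ^ s) L n, tele L n hL,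
    map_sub, map_sub]
  · congr 1
    simp only [PS, coeff_mk, coeff_one]
    rw [cS_far]
    · split_ifs <;> simp
    · intro i hi
      simp only [Finset.mem_Icc] at hi
      omega
  · intro m hm
    rw [coeff_mk, bN_eq L m (n + 2) (by omega), map_sum]
    push_cast
    refine Finset.sum_congr rfl fun s hs => ?_
    simp only [Finset.mem_Icc] at hs
    rw [coeff_X_PS _ _ _ (by omega) (by simp)]

lemma small_eq (L n : ℕ) :
    Nat.card {p : n.Partition // InSmall2 L p} = cSs (Finset.Icc 2 (L + 2)) 2 n := by
  classical
  unfold cSs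
  rw [Nat.card_eq_fintype_card, Fintype.card_subtype]
  congr 1
  ext p
  simp only [Finset.mem_filter, Finset.mem_univ, true_and, Finset.mem_Icc]
  exact Iff.rfl

/-- Generating function of `gL`. -/
noncomputable def GS (L : ℕ) : PowerSeries ℤ := PowerSeries.mk fun n => gL L n

open PowerSeries in
lemma GS_eq (L : ℕ) :
    GS L = PS (Finset.Icc 2 (L + 2)) * X ^ 2 - PowerSeries.mk fun n => (bN L n : ℤ) := by
  ext n
  rw [map_sub, coeff_X_PS _ _ _ (by omega) (by simp), GS, coeff_mk, coeff_mk, gL, small_eq]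
  rfl

open PowerSeries in
/-- The numerator polynomial. -/
noncomputable def NS (L : ℕ) : PowerSeries ℤ :=
  (∑ j ∈ Finset.range L, X ^ (2 * j + 2)) - 1 - X ^ L

open PowerSeries in
lemma GS_mul (L : ℕ) (hL : 1 ≤ L) :
    GS L * (1 - X ^ (2 * L)) = NS L * PS (Finset.Icc 3 (L + 2)) + 1 + X ^ L := by
  have h1 := big_series L hL
  have h2 := PS_low 2 (L + 2) (by omega) (by omega)
  have h3 : (1 - X ^ 2) * ∑ j ∈ Finset.range L, ((X : PowerSeries ℤ) ^ 2) ^ j = 1 - (X ^ 2) ^ L :=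
    mul_neg_geom_sum _ _
  have h4 : ∑ j ∈ Finset.range L, (X : PowerSeries ℤ) ^ (2 * j + 2)
      = X ^ 2 * ∑ j ∈ Finset.range L, (X ^ 2) ^ j := by
    rw [Finset.mul_sum]
    refine Finset.sum_congr rfl fun j _ => ?_
    ring
  rw [← pow_mul] at h3
  rw [GS_eq, NS, h4]
  set B := (PowerSeries.mk fun n => (bN L n : ℤ))
  set W := ∑ j ∈ Finset.range L, ((X : PowerSeries ℤ) ^ 2) ^ j
  have h5 : (X : PowerSeries ℤ) ^ (2 * L) = X ^ L * X ^ L := by ring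
  have h6 : B * (1 - X ^ (2 * L)) = (PS (Finset.Icc 3 (L + 2)) - 1) * (1 + X ^ L) := by
    rw [← h1, h5]; ring
  rw [sub_mul, h6, ← h3]
  change _ = PS (Finset.Icc 3 (L + 2)) at h2
  rw [← h2]
  ring

/-- Divide the coefficient sequence `l` by `1 - X^t`, first `n` coefficients. -/
def divL (t : ℕ) (l : List ℤ) : ℕ → List ℤ
  | 0 => []
  | n + 1 => (fun p : List ℤ => p ++ [l.getD n 0 + if t ≤ n then p.getD (n - t) 0 else 0])
      (divL t l n)

/-- `l` records the first 30 coefficients of `F`, and the others are nonnegative. -/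
def GoodS (F : PowerSeries ℤ) (l : List ℤ) : Prop :=
  (∀ n < 30, PowerSeries.coeff n F = l.getD n 0) ∧ ∀ n, 30 ≤ n → 0 ≤ PowerSeries.coeff n F

lemma divL_length (t : ℕ) (l : List ℤ) (n : ℕ) : (divL t l n).length = n := by
  induction n with
  | zero => rfl
  | succ n ih => simp [divL, ih]

open PowerSeries in
lemma coeff_step {F F' : PowerSeries ℤ} {t : ℕ} (h : F' * (1 - X ^ t) = F) (n : ℕ) :
    coeff n F' = coeff n F + if t ≤ n then coeff (n - t) F' else 0 := by
  rw [← h, mul_sub, mul_one, map_sub, coeff_mul_X_pow']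
  ring

open PowerSeries in
lemma divL_spec {F F' : PowerSeries ℤ} {t : ℕ} {l : List ℤ} (ht : 0 < t)
    (h : F' * (1 - X ^ t) = F) (n : ℕ) (hl : ∀ i < n, coeff i F = l.getD i 0) :
    ∀ i < n, coeff i F' = (divL t l n).getD i 0 := by
  induction n with
  | zero => intro i hi; omega
  | succ n ih =>
    have ih' := ih fun i hi => hl i (by omega)
    intro i hi
    rw [divL]
    rcases Nat.lt_succ_iff_lt_or_eq.1 hi with hi | rfl
    · rw [List.getD_append _ _ _ _ (by rw [divL_length]; exact hi)]
      exact ih' i hi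
    · rw [List.getD_append_right _ _ _ _ (by rw [divL_length]), divL_length, coeff_step h,
        hl i hi]
      simp only [Nat.sub_self, List.getD_cons_zero]
      congr 1
      split_ifs with hti
      · exact ih' _ (by omega)
      · rfl

open PowerSeries in
lemma good_step {F F' : PowerSeries ℤ} {t : ℕ} {l : List ℤ} (ht : 0 < t) (ht' : t ≤ 30)
    (h : F' * (1 - X ^ t) = F) (hF : GoodS F l)
    (hc : ∀ i < 30, 30 - t ≤ i → 0 ≤ (divL t l 30).getD i 0) : GoodS F' (divL t l 30) := by
  have h1 := divL_spec ht h 30 hF.1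
  refine ⟨h1, ?_⟩
  intro n
  induction n using Nat.strong_induction_on with
  | _ n ih =>
    intro hn
    rw [coeff_step h, if_pos (by omega)]
    have h2 := hF.2 n hn
    have h3 : 0 ≤ coeff (n - t) F' := by
      by_cases hnt : 30 ≤ n - t
      · exact ih (n - t) (by omega) hnt
      · rw [h1 _ (by omega)]
        exact hc _ (by omega) (by omega)
    omega

/-- Coefficients of the numerator. -/
def baseL (L : ℕ) : List ℤ :=
  (List.range 30).map fun n =>
    (∑ j ∈ Finset.range L, if n = 2 * j + 2 then (1 : ℤ) else 0) - (if n = 0 then 1 else 0)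
      - (if n = L then 1 else 0)

open PowerSeries in
lemma good_base (L : ℕ) (hL : L ≤ 10) : GoodS (NS L) (baseL L) := by
  have hc : ∀ n, coeff n (NS L) =
    (∑ j ∈ Finset.range L, if n = 2 * j + 2 then (1 : ℤ) else 0) - (if n = 0 then 1 else 0)
      - (if n = L then 1 else 0) := by
    intro n
    simp [NS, coeff_X_pow, coeff_one]
  constructor
  · intro n hn
    rw [hc, baseL, List.getD_eq_getElem _ _ (by simpa using hn)]
    simp
  · intro n hn
    rw [hc, if_neg (by omega), if_neg (by omega), Finset.sum_eq_zero]
    · simp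
    · intro j hj
      rw [Finset.mem_range] at hj
      rw [if_neg (by omega)]

/-- Coefficients after dividing by `(1 - X^3) ⋯ (1 - X^(k+2))`. -/
def chainL (L : ℕ) : ℕ → List ℤ
  | 0 => baseL L
  | k + 1 => divL (k + 3) (chainL L k) 30

lemma good_chain (L : ℕ) (hL : L ≤ 10) (k : ℕ) (hk : k ≤ L)
    (hc : ∀ j < L, ∀ i < 30, 30 - (j + 3) ≤ i → 0 ≤ (chainL L (j + 1)).getD i 0) :
    GoodS (NS L * PS (Finset.Icc 3 (k + 2))) (chainL L k) := by
  induction k with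
  | zero =>
    have : PS (Finset.Icc 3 (0 + 2)) = 1 := by
      ext n
      rw [PS, PowerSeries.coeff_mk, cS_far _ _ (by simp), PowerSeries.coeff_one]
      split_ifs <;> simp
    rw [this, mul_one]
    exact good_base L hL
  | succ k ih =>
    refine good_step (by omega) (by omega) ?_ (ih (by omega)) (hc k (by omega))
    rw [mul_assoc, show k + 1 + 2 = (k + 2) + 1 from by ring, show k + 3 = (k + 2) + 1 from by ring,
      PS_high 3 (k + 2) (by omega)]

/-- Coefficients after adding `1 + X^L`. -/
def addL (L : ℕ) (l : List ℤ) : List ℤ :=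
  (List.range 30).map fun n =>
    l.getD n 0 + (if n = 0 then 1 else 0) + (if n = L then 1 else 0)

open PowerSeries in
lemma good_add (L : ℕ) (F : PowerSeries ℤ) (l : List ℤ) (h : GoodS F l) :
    GoodS (F + 1 + X ^ L) (addL L l) := by
  constructor
  · intro n hn
    rw [addL, List.getD_eq_getElem _ _ (by simpa using hn)]
    simp [coeff_X_pow, coeff_one, h.1 n hn]
  · intro n hn
    have := h.2 n hn
    rw [map_add, map_add, coeff_X_pow, coeff_one]
    split_ifs <;> omega

/-- Final list of coefficients. -/
def finL (L : ℕ) : List ℤ := divL (2 * L) (addL L (chainL L L)) 30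

lemma main_of_check (L : ℕ) (hL1 : 5 ≤ L) (hL2 : L ≤ 10)
    (hc : ∀ j < L, ∀ i < 30, 30 - (j + 3) ≤ i → 0 ≤ (chainL L (j + 1)).getD i 0)
    (hf : ∀ i < 30, i ≠ 3 → 0 ≤ (finL L).getD i 0)
    (h3 : -1 ≤ (finL L).getD 3 0) :
    (∀ N : ℕ, 0 < N → N ≠ 3 → 0 ≤ gL L N) ∧ -1 ≤ gL L 3 := by
  have hg : GoodS (GS L) (finL L) := by
    refine good_step (by omega) (by omega) (GS_mul L (by omega))
      (good_add L _ _ (good_chain L hL2 L le_rfl hc)) ?_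
    exact fun i hi hi' => hf i hi (by omega)
  have hco : ∀ n, PowerSeries.coeff n (GS L) = gL L n := fun n => by rw [GS, PowerSeries.coeff_mk]
  constructor
  · intro N _ hN
    rw [← hco]
    by_cases h : N < 30
    · rw [hg.1 N h]
      exact hf N h hN
    · exact hg.2 N (by omega)
  · rw [← hco, hg.1 3 (by norm_num)]
    exact h3

theorem stmt_14 (L : ℕ) (hL1 : 5 ≤ L) (hL2 : L ≤ 10) :
    (∀ N : ℕ, 0 < N → N ≠ 3 → 0 ≤ gL L N) ∧ -1 ≤ gL L 3 := by
  refine main_of_check L hL1 hL2 ?_ ?_ ?_ <;> interval_cases L <;> decide +kernel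
end

section
/- For L = 4: for every positive integer N with N ∉ {3, 9} one has g_4(N) ≥ 0, and g_4(3) ≥ −1, g_4(9) ≥ −1. Equivalently, the series G_{4,2}(q) + q^3 + q^9 has all coefficients nonnegative. -/
/-- Number of partitions of the integer `n` with all parts in `S` (zero if `n < 0`). -/
noncomputable def cntP (S : Finset ℕ) (n : ℤ) : ℤ :=
  if 0 ≤ n then (Nat.card {p : n.toNat.Partition // ∀ x ∈ p.parts, x ∈ S} : ℤ) else 0

theorem cntP_neg (S : Finset ℕ) (n : ℤ) (h : n < 0) : cntP S n = 0 := by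
  unfold cntP; rw [if_neg (by omega)]

theorem cntP_nat (S : Finset ℕ) (n : ℕ) :
    cntP S n = Nat.card {p : n.Partition // ∀ x ∈ p.parts, x ∈ S} := by
  unfold cntP; rw [if_pos (by omega)]; rfl

/-- Removing one copy of the part `s`. -/
noncomputable def removeEquiv (T : Finset ℕ) (s N : ℕ) (hs : 0 < s) (hT : s ∈ T) :
    {p : (N + s).Partition // s ∈ p.parts ∧ ∀ x ∈ p.parts, x ∈ T} ≃
      {p : N.Partition // ∀ x ∈ p.parts, x ∈ T} where
  toFun p := ⟨⟨p.1.parts.erase s, fun {i} hi => p.1.parts_pos (Multiset.mem_of_mem_erase hi), by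
      have h1 := p.1.parts_sum
      have h2 := Multiset.sum_erase p.2.1
      omega⟩, fun x hx => p.2.2 x (Multiset.mem_of_mem_erase hx)⟩
  invFun p := ⟨⟨s ::ₘ p.1.parts, fun {i} hi => by
      rcases Multiset.mem_cons.1 hi with h | h
      · omega
      · exact p.1.parts_pos h, by
      have h1 := p.1.parts_sum
      rw [Multiset.sum_cons]; omega⟩, Multiset.mem_cons_self _ _, fun x hx => by
      rcases Multiset.mem_cons.1 hx with h | h
      · exact h ▸ hT
      · exact p.2 x h⟩
  left_inv p := by
    apply Subtype.ext
    apply Nat.Partition.ext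
    exact Multiset.cons_erase p.2.1
  right_inv p := by
    apply Subtype.ext
    apply Nat.Partition.ext
    exact Multiset.erase_cons_head _ _

theorem card_mem (T : Finset ℕ) (s N : ℕ) (hs : 0 < s) (hT : s ∈ T) :
    (Nat.card {p : N.Partition // s ∈ p.parts ∧ ∀ x ∈ p.parts, x ∈ T} : ℤ) =
      cntP T ((N : ℤ) - s) := by
  by_cases h : s ≤ N
  · obtain ⟨k, rfl⟩ := Nat.exists_eq_add_of_le' h
    rw [Nat.card_congr (removeEquiv T s k hs hT), ← cntP_nat]
    congr 1; push_cast; ring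
  · rw [cntP_neg _ _ (by omega)]
    have : IsEmpty {p : N.Partition // s ∈ p.parts ∧ ∀ x ∈ p.parts, x ∈ T} := by
      constructor
      rintro ⟨p, h1, _⟩
      have := Multiset.le_sum_of_mem h1
      rw [p.parts_sum] at this
      omega
    simp

theorem cntP_insert (S : Finset ℕ) (s : ℕ) (hs : 0 < s) (hS : s ∉ S) (n : ℤ) :
    cntP (insert s S) n = cntP S n + cntP (insert s S) (n - s) := by
  by_cases hn : 0 ≤ n
  · obtain ⟨N, rfl⟩ := Int.eq_ofNat_of_zero_le hn
    rw [← card_mem _ s N hs (Finset.mem_insert_self _ _), cntP_nat, cntP_nat]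
    classical
    simp only [Nat.card_eq_fintype_card, Fintype.card_subtype]
    norm_cast
    rw [← Finset.card_union_of_disjoint]
    · congr 1
      ext p
      simp only [Finset.mem_filter, Finset.mem_univ, true_and, Finset.mem_union,
        Finset.mem_insert]
      constructor
      · intro h
        by_cases hp : s ∈ p.parts
        · exact Or.inr ⟨hp, h⟩
        · left
          intro x hx
          rcases h x hx with h1 | h1
          · exact absurd (h1 ▸ hx) hp
          · exact h1
      · rintro (h | h)
        · exact fun x hx => Or.inr (h x hx)
        · exact h.2
    · rw [Finset.disjoint_left]
      intro p hp hq
      simp only [Finset.mem_filter, Finset.mem_univ, true_and] at hp hq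
      exact hS (hp _ hq.1)
  · rw [cntP_neg _ _ (by omega), cntP_neg _ _ (by omega), cntP_neg _ _ (by omega)]; rfl

theorem cntP_empty (n : ℤ) : cntP ∅ n = if n = 0 then 1 else 0 := by
  by_cases hn : 0 ≤ n
  · obtain ⟨N, rfl⟩ := Int.eq_ofNat_of_zero_le hn
    rw [cntP_nat]
    rcases Nat.eq_zero_or_pos N with h | h
    · subst h
      have : Unique {p : (0 : ℕ).Partition // ∀ x ∈ p.parts, x ∈ (∅ : Finset ℕ)} :=
        { default := ⟨default, by intro x hx; simp at hx⟩
          uniq := fun a => Subtype.ext (Subsingleton.elim _ _) }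
      simp
    · have : IsEmpty {p : N.Partition // ∀ x ∈ p.parts, x ∈ (∅ : Finset ℕ)} := by
        constructor
        rintro ⟨p, hp⟩
        have h0 : p.parts = 0 := Multiset.eq_zero_of_forall_notMem (fun x hx => by simpa using hp x hx)
        have := p.parts_sum
        rw [h0] at this
        simp at this
        omega
      rw [if_neg (by simp; omega), Nat.card_of_isEmpty]
      rfl
  · rw [cntP_neg _ _ (by omega), if_neg (by omega)]

/-- Four consecutive part sizes. -/
def four (m : ℕ) : Finset ℕ := {m, m + 1, m + 2, m + 3}
/-- Five consecutive part sizes. -/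
def five (m : ℕ) : Finset ℕ := {m, m + 1, m + 2, m + 3, m + 4}

theorem mem_five (m x : ℕ) : x ∈ five m ↔ m ≤ x ∧ x ≤ m + 4 := by
  simp [five]; omega

theorem five_low (m : ℕ) (hm : 0 < m) (n : ℤ) :
    cntP (five m) n = cntP (four (m + 1)) n + cntP (five m) (n - m) := by
  have h : five m = insert m (four (m + 1)) := by
    ext x; simp [five, four]
  rw [h]
  exact cntP_insert _ _ hm (by simp [four]; omega) n

theorem five_high (m : ℕ) (n : ℤ) :
    cntP (five m) n = cntP (four m) n + cntP (five m) (n - m - 4) := by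
  have h : five m = insert (m + 4) (four m) := by
    ext x; simp [five, four]; tauto
  rw [h, cntP_insert _ _ (by omega) (by simp [four]) n]
  push_cast
  rw [sub_sub]

theorem four_large (m : ℕ) (n : ℤ) (h : n < m) : cntP (four m) n = if n = 0 then 1 else 0 := by
  by_cases hm : 0 < m
  · unfold four
    rw [cntP_insert _ m hm (by simp), cntP_neg _ (n - m) (by omega),
      cntP_insert _ (m + 1) (by omega) (by simp), cntP_neg _ (n - _) (by push_cast; omega),
      cntP_insert _ (m + 2) (by omega) (by simp), cntP_neg _ (n - _) (by push_cast; omega),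
      ← insert_empty_eq,
      cntP_insert _ (m + 3) (by omega) (by simp), cntP_neg _ (n - _) (by push_cast; omega),
      cntP_empty]
    simp
  · rw [cntP_neg _ _ (by omega), if_neg (by omega)]

/-- The count of partitions subtracted in `g_4`. -/
noncomputable def bigB (n : ℤ) : ℤ :=
  ∑ m ∈ Finset.Ico 3 (n.toNat + 1), cntP (five m) (n - m)

theorem bigB_eq (n : ℤ) (M : ℕ) (hM : n < M) :
    bigB n = ∑ m ∈ Finset.Ico 3 M, cntP (five m) (n - m) := by
  unfold bigB
  apply Finset.sum_subset
  · intro x; simp; omega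
  · intro x hx hx'
    apply cntP_neg
    simp at hx hx'
    omega

theorem bigB_neg (n : ℤ) (h : n < 0) : bigB n = 0 := by
  rw [bigB_eq n 0 (by omega)]; simp

theorem bigB_step (n : ℤ) :
    bigB n - bigB (n - 4) = cntP (four 3) n - if n = 0 then 1 else 0 := by
  have hM : n < ((n.toNat + 4 : ℕ) : ℤ) := by omega
  rw [bigB_eq n _ hM, bigB_eq (n - 4) (n.toNat + 4) (by omega), ← Finset.sum_sub_distrib]
  rw [← four_large _ n hM]
  have : ∀ m ∈ Finset.Ico 3 (n.toNat + 4),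
      cntP (five m) (n - m) - cntP (five m) (n - 4 - m) =
        -(cntP (four (m + 1)) n - cntP (four m) n) := by
    intro m hm
    have h1 := five_low m (by simp at hm; omega) n
    have h2 := five_high m n
    have h3 : n - 4 - (m : ℤ) = n - m - 4 := by ring
    rw [h3]
    linarith
  rw [Finset.sum_congr rfl this, Finset.sum_neg_distrib,
    Finset.sum_Ico_sub (fun m => cntP (four m) n) (by omega)]
  ring

theorem card_small (N : ℕ) :
    (Nat.card {p : N.Partition // InSmall2 4 p} : ℤ) = cntP (five 2) ((N : ℤ) - 2) := by
  have := card_mem (five 2) 2 N (by norm_num) (by simp [mem_five])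
  rw [show (N : ℤ) - 2 = (N : ℤ) - (2 : ℕ) by norm_num, ← this]
  simp only [InSmall2, mem_five]

theorem card_big (N : ℕ) :
    (Nat.card {p : N.Partition // InBig3 4 p} : ℤ) = bigB N := by
  classical
  unfold bigB
  have : ∀ m ∈ Finset.Ico 3 ((N : ℤ).toNat + 1), cntP (five m) ((N : ℤ) - m) =
      ((Finset.univ.filter
        (fun p : N.Partition => m ∈ p.parts ∧ ∀ x ∈ p.parts, x ∈ five m)).card : ℤ) := by
    intro m hm
    rw [← card_mem (five m) m N (by simp at hm; omega) (by simp [mem_five]),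
      Nat.card_eq_fintype_card, Fintype.card_subtype]
  rw [Finset.sum_congr rfl this, Nat.card_eq_fintype_card, Fintype.card_subtype]
  norm_cast
  rw [← Finset.card_biUnion]
  · congr 1
    ext p
    simp only [Finset.mem_filter, Finset.mem_univ, true_and, Finset.mem_biUnion, Finset.mem_Ico,
      mem_five]
    unfold InBig3
    constructor
    · rintro ⟨h0, h1, h2⟩
      have hne : p.parts.toFinset.Nonempty := by
        obtain ⟨x, hx⟩ := Multiset.exists_mem_of_ne_zero h0
        exact ⟨x, by simpa using hx⟩
      have hmem : p.parts.toFinset.min' hne ∈ p.parts := by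
        simpa using Finset.min'_mem _ hne
      refine ⟨p.parts.toFinset.min' hne, ⟨h1 _ hmem, ?_⟩, hmem, fun x hx => ⟨?_, h2 _ hx _ hmem⟩⟩
      · have := Multiset.le_sum_of_mem hmem
        rw [p.parts_sum] at this
        omega
      · exact Finset.min'_le _ _ (by simpa using hx)
    · rintro ⟨m, ⟨h3, _⟩, hm, h⟩
      refine ⟨fun h0 => by simp [h0] at hm, fun x hx => le_trans h3 (h x hx).1, fun x hx y hy => ?_⟩
      have h4 := h x hx
      have h5 := h y hy
      omega
  · intro a _ b _ hab
    rw [Function.onFun, Finset.disjoint_left]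
    intro p hp hq
    simp only [Finset.mem_filter, Finset.mem_univ, true_and, mem_five] at hp hq
    have := hp.2 _ hq.1
    have := hq.2 _ hp.1
    omega

/-- The coefficient sequence of `(q^4+q^2-1)/((1-q^3)(1-q^4)^2(1-q^5)(1-q^6))`. -/
noncomputable def sE (n : ℤ) : ℤ :=
  cntP (five 2) (n - 2) - bigB n - if 0 ≤ n ∧ n % 4 = 0 then 1 else 0
/-- `sE` times `1-q^6`. -/
noncomputable def s3 (n : ℤ) : ℤ := sE n - sE (n - 6)
/-- `s3` times `1-q^5`. -/
noncomputable def s2 (n : ℤ) : ℤ := s3 n - s3 (n - 5)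
/-- `s2` times `1-q^3`. -/
noncomputable def s1 (n : ℤ) : ℤ := s2 n - s2 (n - 3)

theorem sE_neg (n : ℤ) (h : n < 0) : sE n = 0 := by
  unfold sE; rw [cntP_neg _ _ (by omega), bigB_neg _ h, if_neg (by omega)]; rfl
theorem s3_neg (n : ℤ) (h : n < 0) : s3 n = 0 := by
  unfold s3; rw [sE_neg _ (by omega), sE_neg _ (by omega)]; rfl
theorem s2_neg (n : ℤ) (h : n < 0) : s2 n = 0 := by
  unfold s2; rw [s3_neg _ (by omega), s3_neg _ (by omega)]; rfl
theorem s1_neg (n : ℤ) (h : n < 0) : s1 n = 0 := by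
  unfold s1; rw [s2_neg _ (by omega), s2_neg _ (by omega)]; rfl

theorem sE_step (n : ℤ) : sE n - sE (n - 4) =
    cntP (four 3) (n - 2) + cntP (four 3) (n - 4) - cntP (four 3) n := by
  have h1 := bigB_step n
  have h2 := five_low 2 (by norm_num) (n - 2)
  have h3 := five_low 2 (by norm_num) (n - 4)
  norm_num at h2 h3
  rw [show n - 2 - 2 = n - 4 by ring] at h2
  rw [show n - 4 - 2 = n - 6 by ring] at h3
  unfold sE
  rw [show n - 4 - 2 = n - 6 by ring]
  split_ifs at h1 ⊢ <;> omega

theorem cnt4 (n : ℤ) : cntP {4} n = if 0 ≤ n ∧ n % 4 = 0 then 1 else 0 := by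
  have key : ∀ k : ℕ, ∀ n : ℤ, n < k → cntP {4} n = if 0 ≤ n ∧ n % 4 = 0 then 1 else 0 := by
    intro k
    induction k with
    | zero => intro n hn; rw [cntP_neg _ _ (by simpa using hn), if_neg (by simp at hn; omega)]
    | succ k ih =>
      intro n hn
      have h := cntP_insert ∅ 4 (by norm_num) (by simp) n
      push_cast at h hn
      rw [insert_empty_eq, cntP_empty, ih (n - 4) (by omega)] at h
      rw [h]
      split_ifs <;> omega
  exact key (n.toNat + 1) n (by omega)

theorem four_step (n : ℤ) :
    (cntP (four 3) n - cntP (four 3) (n - 6)) - (cntP (four 3) (n - 5) - cntP (four 3) (n - 11))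
     - ((cntP (four 3) (n - 3) - cntP (four 3) (n - 9))
      - (cntP (four 3) (n - 8) - cntP (four 3) (n - 14))) = cntP {4} n := by
  have e6 : four 3 = insert 6 {3, 4, 5} := by decide
  have e5 : ({3, 4, 5} : Finset ℕ) = insert 5 {3, 4} := by decide
  have h6 : ∀ n, cntP (four 3) n = cntP {3, 4, 5} n + cntP (four 3) (n - 6) := by
    intro n; rw [e6]; exact cntP_insert _ 6 (by norm_num) (by decide) n
  have h5 : ∀ n, cntP {3, 4, 5} n = cntP {3, 4} n + cntP {3, 4, 5} (n - 5) := by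
    intro n; rw [e5]; exact cntP_insert _ 5 (by norm_num) (by decide) n
  have h3 : cntP {3, 4} n = cntP {4} n + cntP {3, 4} (n - 3) :=
    cntP_insert _ 3 (by norm_num) (by decide) n
  have a1 := h6 n
  have a2 := h6 (n - 5)
  have a3 := h6 (n - 3)
  have a4 := h6 (n - 8)
  have b1 := h5 n
  have b2 := h5 (n - 3)
  simp only [sub_sub] at a1 a2 a3 a4 b1 b2
  norm_num at a1 a2 a3 a4 b1 b2
  linarith

/-- Closed form of `s1`. -/
def F1 (n : ℤ) : ℤ :=
  if n < 0 then 0 else if n % 4 = 0 then -1 else if n % 4 = 2 then (n + 2) / 4 else 0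

theorem s1_step (n : ℤ) : s1 n - s1 (n - 4) = cntP {4} (n - 2) + cntP {4} (n - 4) - cntP {4} n := by
  rw [← four_step n, ← four_step (n - 2), ← four_step (n - 4)]
  have a0 := sE_step n
  have a1 := sE_step (n - 6)
  have a2 := sE_step (n - 5)
  have a3 := sE_step (n - 11)
  have a4 := sE_step (n - 3)
  have a5 := sE_step (n - 9)
  have a6 := sE_step (n - 8)
  have a7 := sE_step (n - 14)
  unfold s1 s2 s3
  simp only [sub_sub] at *
  norm_num at *
  linarith

theorem s1_eq (n : ℤ) : s1 n = F1 n := by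
  have key : ∀ k : ℕ, ∀ n : ℤ, n < k → s1 n = F1 n := by
    intro k
    induction k with
    | zero => intro n hn; rw [s1_neg _ (by simpa using hn), F1, if_pos (by simpa using hn)]
    | succ k ih =>
      intro n hn
      have h := s1_step n
      rw [ih (n - 4) (by push_cast at hn; omega), cnt4, cnt4, cnt4] at h
      unfold F1 at *
      split_ifs at * <;> omega
  exact key (n.toNat + 1) n (by omega)

theorem s2_rec (n : ℤ) : s2 n = F1 n + s2 (n - 3) := by
  rw [← s1_eq, s1]; ring
theorem s3_rec (n : ℤ) : s3 n = s2 n + s3 (n - 5) := by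
  rw [s2]; ring
theorem sE_rec (n : ℤ) : sE n = s3 n + sE (n - 6) := by
  rw [s3]; ring

/-- Values of `s2` for small arguments. -/
def V2 (n : ℤ) : ℤ := F1 n + F1 (n - 3) + F1 (n - 6) + F1 (n - 9) + F1 (n - 12) + F1 (n - 15)
  + F1 (n - 18)
/-- Values of `s3` for small arguments. -/
def V3 (n : ℤ) : ℤ := V2 n + V2 (n - 5) + V2 (n - 10) + V2 (n - 15)
/-- Values of `sE` for small arguments. -/
def VE (n : ℤ) : ℤ := V3 n + V3 (n - 6) + V3 (n - 12)

theorem s2_val (n : ℤ) (h : n < 21) : s2 n = V2 n := by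
  rw [s2_rec n, s2_rec (n - 3), s2_rec, s2_rec, s2_rec, s2_rec, s2_rec, s2_neg _ (by omega)]
  unfold V2
  simp only [sub_sub]
  norm_num
  ring
theorem s3_val (n : ℤ) (h : n < 20) : s3 n = V3 n := by
  rw [s3_rec n, s3_rec (n - 5), s3_rec, s3_rec, s3_neg _ (by omega), s2_val _ (by omega),
    s2_val _ (by omega), s2_val _ (by omega), s2_val _ (by omega)]
  unfold V3
  simp only [sub_sub]
  norm_num
  ring
theorem sE_val (n : ℤ) (h : n < 18) : sE n = VE n := by
  rw [sE_rec n, sE_rec (n - 6), sE_rec, sE_neg _ (by omega), s3_val _ (by omega),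
    s3_val _ (by omega), s3_val _ (by omega)]
  unfold VE
  simp only [sub_sub]
  norm_num
  ring

theorem s2_nonneg (k : ℕ) : 0 ≤ s2 (k + 8) := by
  induction k using Nat.strong_induction_on with
  | _ k ih =>
    by_cases hk : k < 12
    · rw [s2_val _ (by omega)]
      interval_cases k <;> decide
    · have h := ih (k - 12) (by omega)
      rw [s2_rec, s2_rec, s2_rec, s2_rec]
      have e : ((k : ℤ) + 8 - 3 - 3 - 3 - 3) = ((k - 12 : ℕ) : ℤ) + 8 := by omega
      rw [e]
      unfold F1
      split_ifs <;> omega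

theorem s3_nonneg (k : ℕ) : 0 ≤ s3 (k + 9) := by
  induction k using Nat.strong_induction_on with
  | _ k ih =>
    by_cases hk : k < 5
    · rw [s3_val _ (by omega)]
      interval_cases k <;> decide
    · have h := ih (k - 5) (by omega)
      have h2 := s2_nonneg (k + 1)
      rw [s3_rec]
      have e : ((k : ℤ) + 9 - 5) = ((k - 5 : ℕ) : ℤ) + 9 := by omega
      have e' : ((k : ℤ) + 9) = ((k + 1 : ℕ) : ℤ) + 8 := by omega
      rw [e, e']
      omega

theorem sE_nonneg (k : ℕ) : 0 ≤ sE (k + 10) := by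
  induction k using Nat.strong_induction_on with
  | _ k ih =>
    by_cases hk : k < 6
    · rw [sE_val _ (by omega)]
      interval_cases k <;> decide
    · have h := ih (k - 6) (by omega)
      have h2 := s3_nonneg (k + 1)
      rw [sE_rec]
      have e : ((k : ℤ) + 10 - 6) = ((k - 6 : ℕ) : ℤ) + 10 := by omega
      have e' : ((k : ℤ) + 10) = ((k + 1 : ℕ) : ℤ) + 9 := by omega
      rw [e, e']
      omega

theorem gL_eq (N : ℕ) : gL 4 N = sE N + if 0 ≤ (N : ℤ) ∧ (N : ℤ) % 4 = 0 then 1 else 0 := by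
  unfold gL sE
  rw [card_small, card_big]; ring

theorem stmt_16 :
    (∀ N : ℕ, 0 < N → N ≠ 3 → N ≠ 9 → 0 ≤ gL 4 N) ∧
      -1 ≤ gL 4 3 ∧ -1 ≤ gL 4 9 := by
  refine ⟨?_, ?_, ?_⟩
  · intro N h0 h3 h9
    rw [gL_eq]
    by_cases hN : N < 10
    · rw [sE_val _ (by omega)]
      interval_cases N <;> first | omega | decide
    · have h := sE_nonneg (N - 10)
      have e : (N : ℤ) = ((N - 10 : ℕ) : ℤ) + 10 := by omega
      rw [← e] at h
      split_ifs <;> omega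
  · rw [gL_eq, sE_val _ (by norm_num)]
    decide
  · rw [gL_eq, sE_val _ (by norm_num)]
    decide
end

section
/- Let L be an integer with 5 ≤ L ≤ 10. Then for every integer N ≥ L(L+3)/2 + 2, the number of partitions of N lying in C*_{L,2} is strictly greater than the number of partitions of N lying in D_{L,2}. -/
/-- `D_{L,2}`: nonempty partitions with all parts in `{3, ..., L+2}`. -/
def InD2 (L : ℕ) {N : ℕ} (p : N.Partition) : Prop :=
  p.parts ≠ 0 ∧ ∀ x ∈ p.parts, 3 ≤ x ∧ x ≤ L + 2

/-- `C*_{L,2}`: partitions with smallest part `2`, all parts `≤ L+2`, and no part equal to `L`. -/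
def InCStar2 (L : ℕ) {N : ℕ} (p : N.Partition) : Prop :=
  2 ∈ p.parts ∧ (∀ x ∈ p.parts, 2 ≤ x ∧ x ≤ L + 2) ∧ L ∉ p.parts

open PowerSeries

namespace Stmt18

/-- Multisets with sum `N` and all elements in `S`. -/
def A (S : Finset ℕ) (N : ℕ) : Set (Multiset ℕ) := {m | m.sum = N ∧ ∀ x ∈ m, x ∈ S}

/-- A partition predicate is the same as a predicate on multisets of positive numbers. -/
theorem card_eq (N : ℕ) (Q : Multiset ℕ → Prop) (hQ : ∀ m, Q m → ∀ x ∈ m, 0 < x) :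
    Nat.card {p : N.Partition // Q p.parts} = Set.ncard {m : Multiset ℕ | m.sum = N ∧ Q m} := by
  rw [← Nat.card_coe_set_eq]
  refine Nat.card_congr ⟨fun p => ⟨p.1.parts, p.1.parts_sum, p.2⟩,
    fun m => ⟨⟨m.1, fun {i} hi => hQ m.1 m.2.2 i hi, m.2.1⟩, m.2.2⟩, ?_, ?_⟩
  · intro p; rfl
  · intro m; rfl

theorem finite_A (S : Finset ℕ) (hS : 0 ∉ S) (N : ℕ) : (A S N).Finite := by
  have hf : (Set.range (fun p : N.Partition => p.parts)).Finite := Set.finite_range _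
  refine hf.subset ?_
  rintro m ⟨h1, h2⟩
  exact ⟨⟨m, fun {i} hi => Nat.pos_of_ne_zero (fun h => hS (h ▸ h2 i hi)), h1⟩, rfl⟩

theorem image_cons (S : Finset ℕ) (a N : ℕ) (ha : a ∈ S) :
    (fun m => a ::ₘ m) '' A S N = {m | m.sum = a + N ∧ (∀ x ∈ m, x ∈ S) ∧ a ∈ m} := by
  ext m
  constructor
  · rintro ⟨m, ⟨h1, h2⟩, rfl⟩
    refine ⟨by simp [h1], ?_, by simp⟩
    intro x hx
    rcases Multiset.mem_cons.1 hx with rfl | hx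
    · exact ha
    · exact h2 x hx
  · rintro ⟨h1, h2, h3⟩
    obtain ⟨t, rfl⟩ := Multiset.exists_cons_of_mem h3
    refine ⟨t, ⟨by simpa using h1, fun x hx => h2 x (Multiset.mem_cons_of_mem hx)⟩, rfl⟩

theorem ncard_cons (S : Finset ℕ) (a N : ℕ) (ha : a ∈ S) :
    Set.ncard {m : Multiset ℕ | m.sum = a + N ∧ (∀ x ∈ m, x ∈ S) ∧ a ∈ m} = (A S N).ncard := by
  rw [← image_cons S a N ha]
  exact Set.ncard_image_of_injective _ (fun x y h => by simpa using h)

theorem rec_A (S : Finset ℕ) (hS : 0 ∉ S) (a : ℕ) (ha : 0 < a) (haS : a ∉ S) (N : ℕ) :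
    (A (insert a S) N).ncard =
      (A S N).ncard + if a ≤ N then (A (insert a S) (N - a)).ncard else 0 := by
  have h0 : 0 ∉ insert a S := by simp [hS]; omega
  have hsplit : A (insert a S) N = A S N ∪
      {m : Multiset ℕ | m.sum = N ∧ (∀ x ∈ m, x ∈ insert a S) ∧ a ∈ m} := by
    ext m
    constructor
    · rintro ⟨h1, h2⟩
      by_cases h : a ∈ m
      · exact Or.inr ⟨h1, h2, h⟩
      · refine Or.inl ⟨h1, fun x hx => ?_⟩
        rcases Finset.mem_insert.1 (h2 x hx) with rfl | h3
        · exact absurd hx h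
        · exact h3
    · rintro (⟨h1, h2⟩ | ⟨h1, h2, h3⟩)
      · exact ⟨h1, fun x hx => Finset.mem_insert_of_mem (h2 x hx)⟩
      · exact ⟨h1, h2⟩
  have hdisj : Disjoint (A S N)
      {m : Multiset ℕ | m.sum = N ∧ (∀ x ∈ m, x ∈ insert a S) ∧ a ∈ m} := by
    rw [Set.disjoint_left]
    rintro m ⟨h1, h2⟩ ⟨h3, h4, h5⟩
    exact haS (h2 a h5)
  have hfin : {m : Multiset ℕ | m.sum = N ∧ (∀ x ∈ m, x ∈ insert a S) ∧ a ∈ m}.Finite :=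
    (finite_A _ h0 N).subset (fun m hm => ⟨hm.1, hm.2.1⟩)
  rw [hsplit, Set.ncard_union_eq hdisj (finite_A S hS N) hfin]
  congr 1
  split_ifs with h
  · rw [← ncard_cons (insert a S) a (N - a) (by simp), Nat.add_sub_cancel' h]
  · rw [Set.ncard_eq_zero hfin]
    ext m
    simp only [Set.mem_ofPred_eq, Set.mem_empty_iff_false, iff_false]
    rintro ⟨h1, h2, h3⟩
    have := Multiset.le_sum_of_mem h3
    omega

/-- Generating function. -/
noncomputable def P (S : Finset ℕ) : PowerSeries ℤ := PowerSeries.mk fun n => ((A S n).ncard : ℤ)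

theorem coeff_step (W : PowerSeries ℤ) (a n : ℕ) :
    coeff n (W * (1 - X ^ a)) = coeff n W - if a ≤ n then coeff (n - a) W else 0 := by
  rw [mul_sub, mul_one, map_sub, coeff_mul_X_pow']

theorem P_insert (S : Finset ℕ) (hS : 0 ∉ S) (a : ℕ) (ha : 0 < a) (haS : a ∉ S) :
    P (insert a S) * (1 - X ^ a) = P S := by
  ext n
  rw [coeff_step]
  simp only [P, coeff_mk]
  rw [rec_A S hS a ha haS n]
  split_ifs <;> simp

theorem P_empty : P ∅ = 1 := by
  ext n
  simp only [P, coeff_mk, coeff_one]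
  split_ifs with h
  · subst h
    have : A ∅ 0 = {0} := by
      ext m
      constructor
      · rintro ⟨_, h2⟩
        exact Multiset.eq_zero_of_forall_notMem (fun x hx => by simpa using h2 x hx)
      · rintro rfl
        simp [A]
    simp [this]
  · have : A ∅ n = ∅ := by
      ext m
      simp only [Set.mem_empty_iff_false, iff_false]
      rintro ⟨h1, h2⟩
      have : m = 0 := Multiset.eq_zero_of_forall_notMem (fun x hx => by simpa using h2 x hx)
      subst this
      simp at h1
      omega
    simp [this]

theorem P_prod (S : Finset ℕ) (hS : 0 ∉ S) : P S * ∏ a ∈ S, (1 - X ^ a) = 1 := by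
  induction S using Finset.induction_on with
  | empty => simp [P_empty]
  | insert a S ha ih =>
    simp only [Finset.mem_insert, not_or] at hS
    rw [Finset.prod_insert ha, ← mul_assoc, P_insert S hS.2 a (by omega) ha, ih hS.2]

/-- The difference series. -/
noncomputable def W (L : ℕ) : PowerSeries ℤ :=
  X ^ 2 * P ((Finset.Icc 2 (L + 2)).erase L) - P (Finset.Icc 3 (L + 2))

/-- The numerator. -/
noncomputable def num (L : ℕ) : PowerSeries ℤ := X ^ 2 * (1 - X ^ L) - (1 - X ^ 2)

theorem W_prod (L : ℕ) (hL : 5 ≤ L) :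
    W L * ∏ a ∈ Finset.Icc 2 (L + 2), (1 - X ^ a) = num L := by
  have h1 := P_prod ((Finset.Icc 2 (L + 2)).erase L) (by simp)
  have h2 := P_prod (Finset.Icc 3 (L + 2)) (by simp)
  have e1 : ∏ a ∈ Finset.Icc 2 (L + 2), (1 - X ^ a : PowerSeries ℤ) =
      (1 - X ^ L) * ∏ a ∈ (Finset.Icc 2 (L + 2)).erase L, (1 - X ^ a) :=
    (Finset.mul_prod_erase _ _ (by simp; omega)).symm
  have e2 : ∏ a ∈ Finset.Icc 2 (L + 2), (1 - X ^ a : PowerSeries ℤ) =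
      (1 - X ^ 2) * ∏ a ∈ Finset.Icc 3 (L + 2), (1 - X ^ a) := by
    have : Finset.Icc 2 (L + 2) = insert 2 (Finset.Icc 3 (L + 2)) := by
      ext x; simp; omega
    rw [this, Finset.prod_insert (by simp)]
  rw [W, sub_mul]
  nth_rewrite 1 [e1]
  rw [e2, num]
  linear_combination (X ^ 2 * (1 - X ^ L)) * h1 - (1 - X ^ 2) * h2

/-- `t` lists the values of `f` at `t.length - 1, ..., 0`. -/
def Tab (f : ℕ → ℤ) : List ℤ → Prop
  | [] => True
  | x :: xs => x = f xs.length ∧ Tab f xs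

theorem Tab.getD {f : ℕ → ℤ} : ∀ {t : List ℤ}, Tab f t → ∀ k,
    t.getD k 0 = if k < t.length then f (t.length - 1 - k) else 0
  | [], _, k => by simp
  | x :: xs, h, 0 => by simpa using h.1
  | x :: xs, h, k + 1 => by
    have := Tab.getD h.2 k
    simp only [List.getD_cons_succ, List.length_cons, this]
    split_ifs with h1 h2 h2
    · congr 1; omega
    · omega
    · omega
    · rfl

def consD (a : ℕ) (x : ℤ) (t : List ℤ) : List ℤ := (x + t.getD (a - 1) 0) :: t

def divR (a : ℕ) : List ℤ → List ℤ
  | [] => []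
  | x :: xs => consD a x (divR a xs)

theorem divR_length (a : ℕ) : ∀ t, (divR a t).length = t.length
  | [] => rfl
  | x :: xs => by simp [divR, consD, divR_length a xs]

theorem Tab.divR {V V' : PowerSeries ℤ} {a : ℕ} (ha : 0 < a) (h : V * (1 - X ^ a) = V') :
    ∀ {t : List ℤ}, Tab (fun n => coeff n V') t → Tab (fun n => coeff n V) (divR a t)
  | [], _ => trivial
  | x :: xs, ht => by
    have ih := Tab.divR ha h ht.2
    refine ⟨?_, ih⟩
    rw [ih.getD, divR_length]
    have h1 := ht.1
    simp only at h1
    rw [h1, ← h, coeff_step]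
    by_cases h2 : a ≤ xs.length
    · rw [if_pos h2, if_pos (by omega)]
      have : xs.length - 1 - (a - 1) = xs.length - a := by omega
      rw [this]; ring
    · rw [if_neg h2, if_neg (by omega)]; ring

def numC (L n : ℕ) : ℤ :=
  2 * (if n = 2 then 1 else 0) - (if n = L + 2 then 1 else 0) - (if n = 0 then 1 else 0)

def numT (L : ℕ) : ℕ → List ℤ
  | 0 => []
  | n + 1 => numC L n :: numT L n

theorem coeff_num (L n : ℕ) : coeff n (num L) = numC L n := by
  have : num L = X ^ 2 + X ^ 2 - X ^ (L + 2) - 1 := by rw [num]; ring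
  rw [this]
  simp only [map_sub, map_add, coeff_X_pow, coeff_one, numC]
  ring

theorem numT_length (L : ℕ) : ∀ n, (numT L n).length = n
  | 0 => rfl
  | n + 1 => by simp [numT, numT_length L n]

theorem numT_tab (L : ℕ) : ∀ n, Tab (fun n => coeff n (num L)) (numT L n)
  | 0 => trivial
  | n + 1 => ⟨by simp [numT_length, coeff_num], numT_tab L n⟩

/-- table of the first 50 coefficients of `num / ∏ (1 - X^a)` -/
def table (L : ℕ) : List ℕ → List ℤ
  | [] => numT L 50
  | a :: l => divR a (table L l)

theorem table_length (L : ℕ) : ∀ l, (table L l).length = 50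
  | [] => numT_length L 50
  | a :: l => by rw [table, divR_length, table_length L l]

noncomputable def den (l : List ℕ) : PowerSeries ℤ := (l.map (fun a => 1 - X ^ a)).prod

theorem table_tab (L : ℕ) : ∀ (l : List ℕ), (∀ a ∈ l, 0 < a) → ∀ V : PowerSeries ℤ,
    V * den l = num L → Tab (fun n => coeff n V) (table L l)
  | [], _, V, h => by
    have : V = num L := by simpa [den] using h
    rw [this]; exact numT_tab L 50
  | a :: l, hl, V, h => by
    refine Tab.divR (hl a (by simp)) rfl
      (table_tab L l (fun b hb => hl b (by simp [hb])) (V * (1 - X ^ a)) ?_)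
    rw [← h, den, den, List.map_cons, List.prod_cons, mul_assoc]

theorem table_val (L : ℕ) (l : List ℕ) (hl : ∀ a ∈ l, 0 < a) (V : PowerSeries ℤ)
    (h : V * den l = num L) (n : ℕ) (hn : n < 50) :
    coeff n V = (table L l).getD (49 - n) 0 := by
  have := (table_tab L l hl V h).getD (49 - n)
  rw [this, table_length, if_pos (by omega)]
  congr 2
  omega

theorem base_rec (L : ℕ) (hL : L ≤ 10) (V : PowerSeries ℤ) (h : V * den [2, 3, 5] = num L)
    (n : ℕ) (hn : 3 ≤ n) :
    coeff (n + 10) V = coeff (n + 8) V + coeff (n + 7) V - coeff (n + 3) V - coeff (n + 2) V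
      + coeff n V := by
  have h1 : V - V * X ^ 2 - V * X ^ 3 + V * X ^ 7 + V * X ^ 8 - V * X ^ 10 = num L := by
    rw [← h]; simp only [den, List.map_cons, List.map_nil, List.prod_cons, List.prod_nil]; ring
  have h2 := congrArg (coeff (n + 10)) h1
  rw [coeff_num, numC, if_neg (by omega), if_neg (by omega), if_neg (by omega)] at h2
  simp only [map_sub, map_add, coeff_mul_X_pow'] at h2
  rw [if_pos (by omega), if_pos (by omega), if_pos (by omega), if_pos (by omega),
    if_pos (by omega)] at h2
  simp only [show n + 10 - 2 = n + 8 by omega, show n + 10 - 3 = n + 7 by omega,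
    show n + 10 - 7 = n + 3 by omega, show n + 10 - 8 = n + 2 by omega,
    show n + 10 - 10 = n by omega] at h2
  linarith

theorem base_periodic (f : ℕ → ℤ) (c : ℤ)
    (hf : ∀ n, 3 ≤ n → f (n + 10) = f (n + 8) + f (n + 7) - f (n + 3) - f (n + 2) + f n)
    (h0 : ∀ n, 3 ≤ n → n < 13 → f (n + 30) = f n + c) :
    ∀ n, 3 ≤ n → f (n + 30) = f n + c := by
  intro n
  induction n using Nat.strong_induction_on with
  | _ n ih =>
    intro hn
    by_cases h : n < 13
    · exact h0 n hn h
    · obtain ⟨m, rfl⟩ : ∃ m, n = m + 10 := ⟨n - 10, by omega⟩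
      have e1 := hf m (by omega)
      have e2 := hf (m + 30) (by omega)
      have i8 := ih (m + 8) (by omega) (by omega)
      have i7 := ih (m + 7) (by omega) (by omega)
      have i3 := ih (m + 3) (by omega) (by omega)
      have i2 := ih (m + 2) (by omega) (by omega)
      have i0 := ih m (by omega) (by omega)
      simp only [show ∀ k, m + 30 + k = m + k + 30 by intro k; omega] at e2
      linarith

theorem base_pos (f : ℕ → ℤ) (c : ℤ) (hc : 0 ≤ c)
    (hf : ∀ n, 3 ≤ n → f (n + 30) = f n + c) (h0 : ∀ n, 16 ≤ n → n < 46 → 0 < f n) :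
    ∀ n, 16 ≤ n → 0 < f n := by
  intro n
  induction n using Nat.strong_induction_on with
  | _ n ih =>
    intro hn
    by_cases h : n < 46
    · exact h0 n hn h
    · have := hf (n - 30) (by omega)
      rw [show n - 30 + 30 = n by omega] at this
      have := ih (n - 30) (by omega) (by omega)
      linarith

theorem step_pos (V V' : PowerSeries ℤ) (a : ℕ) (ha : 0 < a) (ha' : a ≤ 12)
    (h : V * (1 - X ^ a) = V') (h' : ∀ n, 16 ≤ n → 0 < coeff n V')
    (h0 : ∀ n, 16 ≤ n → n < 28 → 0 < coeff n V) : ∀ n, 16 ≤ n → 0 < coeff n V := by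
  intro n
  induction n using Nat.strong_induction_on with
  | _ n ih =>
    intro hn
    by_cases h1 : n < 28
    · exact h0 n hn h1
    · have e := coeff_step V a n
      rw [h, if_pos (by omega)] at e
      have := ih (n - a) (by omega) (by omega)
      have := h' n hn
      linarith

/-- Finite check for the base list. -/
def baseOK (L : ℕ) (t : List ℤ) : Bool :=
  (List.range 13).all (fun n => decide (n < 3) ||
    decide (t.getD (49 - (n + 30)) 0 = t.getD (49 - n) 0 + ((L : ℤ) - 2))) &&
  (List.range 46).all (fun n => decide (n < 16) || decide (0 < t.getD (49 - n) 0))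

/-- Finite check for later lists. -/
def stepOK (t : List ℤ) : Bool :=
  (List.range 28).all (fun n => decide (n < 16) || decide (0 < t.getD (49 - n) 0))

def allOK (L : ℕ) : List ℕ → Bool
  | [] => baseOK L (table L [2, 3, 5])
  | a :: l => decide (0 < a) && decide (a ≤ 12) && stepOK (table L (a :: l ++ [2, 3, 5])) &&
      allOK L l

theorem allOK_mem (L : ℕ) : ∀ l, allOK L l = true → ∀ a ∈ l, 0 < a
  | [], _, a, ha => by simp at ha
  | b :: l, h, a, ha => by
    simp only [allOK, Bool.and_eq_true, decide_eq_true_eq] at h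
    rcases List.mem_cons.1 ha with rfl | ha
    · exact h.1.1.1
    · exact allOK_mem L l h.2 a ha

theorem main_pos (L : ℕ) (hL : 2 ≤ L) (hL' : L ≤ 10) : ∀ l, allOK L l = true →
    ∀ V : PowerSeries ℤ, V * den (l ++ [2, 3, 5]) = num L → ∀ n, 16 ≤ n → 0 < coeff n V
  | [], h, V, hV => by
    simp only [allOK, baseOK, Bool.and_eq_true, List.all_eq_true, List.mem_range,
      Bool.or_eq_true, decide_eq_true_eq] at h
    have hv := table_val L [2, 3, 5] (by simp) V hV
    refine base_pos (fun n => coeff n V) ((L : ℤ) - 2) (by omega)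
      (base_periodic (fun n => coeff n V) _ (base_rec L hL' V hV) ?_) ?_
    · intro n h1 h2
      rw [hv _ (by omega), hv _ (by omega)]
      rcases h.1 n h2 with h3 | h3
      · omega
      · exact h3
    · intro n h1 h2
      rw [hv _ (by omega)]
      rcases h.2 n h2 with h3 | h3
      · omega
      · exact h3
  | a :: l, h, V, hV => by
    have hm := allOK_mem L _ h
    simp only [allOK, stepOK, Bool.and_eq_true, List.all_eq_true, List.mem_range,
      Bool.or_eq_true, decide_eq_true_eq] at h
    have hv := table_val L (a :: l ++ [2, 3, 5]) (by
      intro b hb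
      rcases List.mem_append.1 hb with hb | hb
      · exact hm b hb
      · simp at hb; omega) V hV
    have hV' : (V * (1 - X ^ a)) * den (l ++ [2, 3, 5]) = num L := by
      rw [← hV, den, den, List.cons_append, List.map_cons, List.prod_cons, mul_assoc]
    refine step_pos V _ a h.1.1.1 h.1.1.2 rfl (main_pos L hL hL' l h.2 _ hV') ?_
    intro n h1 h2
    rw [hv _ (by omega)]
    rcases h.1.2 n h2 with h3 | h3
    · omega
    · exact h3

theorem W_pos (L : ℕ) (h5 : 5 ≤ L) (h10 : L ≤ 10) (l : List ℕ) (hl : allOK L l = true)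
    (hp : (l ++ [2, 3, 5]).Nodup ∧ (l ++ [2, 3, 5]).toFinset = Finset.Icc 2 (L + 2)) :
    ∀ n, 16 ≤ n → 0 < coeff n (W L) := by
  refine main_pos L (by omega) h10 l hl (W L) ?_
  rw [← W_prod L h5, ← hp.2, den, List.prod_toFinset _ hp.1]

theorem W_pos' (L : ℕ) (h5 : 5 ≤ L) (h10 : L ≤ 10) : ∀ n, 16 ≤ n → 0 < coeff n (W L) := by
  interval_cases L
  · exact W_pos 5 (by omega) (by omega) [7, 6, 4] (by decide +kernel) (by decide +kernel)
  · exact W_pos 6 (by omega) (by omega) [8, 7, 6, 4] (by decide +kernel) (by decide +kernel)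
  · exact W_pos 7 (by omega) (by omega) [9, 8, 7, 6, 4] (by decide +kernel) (by decide +kernel)
  · exact W_pos 8 (by omega) (by omega) [10, 9, 8, 7, 6, 4] (by decide +kernel)
      (by decide +kernel)
  · exact W_pos 9 (by omega) (by omega) [11, 10, 9, 8, 7, 6, 4] (by decide +kernel)
      (by decide +kernel)
  · exact W_pos 10 (by omega) (by omega) [12, 11, 10, 9, 8, 7, 6, 4] (by decide +kernel)
      (by decide +kernel)

end Stmt18

open Stmt18

theorem stmt_18 (L : ℕ) (hL1 : 5 ≤ L) (hL2 : L ≤ 10)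
    (N : ℕ) (hN : L * (L + 3) / 2 + 2 ≤ N) :
    Nat.card {p : N.Partition // InCStar2 L p} > Nat.card {p : N.Partition // InD2 L p} := by
  have hN16 : 16 ≤ N := by
    have : 5 * (5 + 3) ≤ L * (L + 3) := Nat.mul_le_mul hL1 (by omega)
    omega
  have hC : Nat.card {p : N.Partition // InCStar2 L p} =
      (A ((Finset.Icc 2 (L + 2)).erase L) (N - 2)).ncard := by
    rw [← ncard_cons _ 2 (N - 2) (by simp; omega), Nat.add_sub_cancel' (by omega)]
    refine (card_eq N (fun m => 2 ∈ m ∧ (∀ x ∈ m, 2 ≤ x ∧ x ≤ L + 2) ∧ L ∉ m)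
      (fun m hm x hx => by have := hm.2.1 x hx; omega)).trans ?_
    congr 1
    ext m
    simp only [Set.mem_ofPred_eq, Finset.mem_erase, Finset.mem_Icc]
    constructor
    · rintro ⟨h1, h2, h3, h4⟩
      exact ⟨h1, fun x hx => ⟨fun h => h4 (h ▸ hx), h3 x hx⟩, h2⟩
    · rintro ⟨h1, h2, h3⟩
      exact ⟨h1, h3, fun x hx => (h2 x hx).2, fun h => (h2 L h).1 rfl⟩
  have hD : Nat.card {p : N.Partition // InD2 L p} = (A (Finset.Icc 3 (L + 2)) N).ncard := by
    refine (card_eq N (fun m => m ≠ 0 ∧ ∀ x ∈ m, 3 ≤ x ∧ x ≤ L + 2)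
      (fun m hm x hx => by have := hm.2 x hx; omega)).trans ?_
    congr 1
    ext m
    simp only [Set.mem_ofPred_eq, A, Finset.mem_Icc]
    constructor
    · rintro ⟨h1, h2, h3⟩
      exact ⟨h1, h3⟩
    · rintro ⟨h1, h2⟩
      refine ⟨h1, ?_, h2⟩
      rintro rfl
      simp at h1
      omega
  have := W_pos' L hL1 hL2 N hN16
  rw [W, map_sub, coeff_X_pow_mul', if_pos (by omega)] at this
  simp only [P, coeff_mk] at this
  rw [hC, hD]
  omega
end
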